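/- arXiv:2108.13652 — 2 statements merged into one kernel-verified Lean document; each statement's English description precedes it below -/
import Mathlib

section
/- Let k be an algebraically closed field of characteristic 3, let g = sl_3(k) be the Lie algebra of traceless 3×3 matrices over k, let Z(g) be its center, and let L = g/Z(g) be the 7-dimensional quotient g-module with the action induced by the adjoint action. Then dim_k H^3(g, L) = 8. -/
/-! Chevalley–Eilenberg cohomology of a Lie algebra with coefficients in a module. -/

section ChevalleyEilenberg

variable (k : Type*) [Field k]
variable (g : Type*) [LieRing g] [LieAlgebra k g]
variable (M : Type*) [AddCommGroup M] [Module k M] [LieRingModule g M] [LieModule k g M]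

/-- The Chevalley–Eilenberg differential, as a raw function from alternating `n`-cochains
to `(n+1)`-ary functions:
`dψ(l₀,…,lₙ) = Σ_{i<j} (−1)^{i+j} ψ(⁅lᵢ,lⱼ⁆, …, l̂ᵢ, …, l̂ⱼ, …) + Σ_i (−1)^i ⁅lᵢ, ψ(…, l̂ᵢ, …)⁆`
(indices written from 0; this is the paper's formula with 1-based indices shifted by one). -/
def ceD : ∀ {n : ℕ}, (g [⋀^Fin n]→ₗ[k] M) → ((Fin (n + 1) → g) → M)
  | 0, ψ, v => ⁅v 0, ψ ![]⁆
  | (n + 1), ψ, v =>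
      (∑ i : Fin (n + 2), ∑ j : Fin (n + 2),
        if h : i < j then
          ((-1 : ℤ) ^ (i.val + j.val)) •
            ψ (Fin.cons ⁅v i, v j⁆
              (fun l => v (i.succAbove
                ((j.pred (Fin.pos_iff_ne_zero.mp (lt_of_le_of_lt i.zero_le h))).succAbove l))))
        else 0)
      + ∑ i : Fin (n + 2), ((-1 : ℤ) ^ i.val) • ⁅v i, ψ (fun l => v (i.succAbove l))⁆

variable {k g M}

private lemma dite_add_zero {P : Prop} [Decidable P] {N : Type*} [AddZeroClass N]
    (A B : P → N) :
    (dite P (fun h => A h + B h) fun _ => 0) =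
      (dite P A fun _ => 0) + (dite P B fun _ => 0) := by
  split_ifs <;> simp

private lemma dite_smul_zero {P : Prop} [Decidable P] {N : Type*} [AddCommGroup N] [Module k N]
    (c : k) (A : P → N) :
    (dite P (fun h => c • A h) fun _ => 0) = c • dite P A fun _ => 0 := by
  split_ifs <;> simp

lemma ceD_add {n : ℕ} (ψ φ : g [⋀^Fin n]→ₗ[k] M) (v : Fin (n + 1) → g) :
    ceD k g M (ψ + φ) v = ceD k g M ψ v + ceD k g M φ v := by
  cases n with
  | zero => simp [ceD]
  | succ n =>
    simp only [ceD, AlternatingMap.add_apply, smul_add, lie_add, dite_add_zero,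
      Finset.sum_add_distrib]
    abel

lemma ceD_smul {n : ℕ} (c : k) (ψ : g [⋀^Fin n]→ₗ[k] M) (v : Fin (n + 1) → g) :
    ceD k g M (c • ψ) v = c • ceD k g M ψ v := by
  cases n with
  | zero => simp [ceD]
  | succ n =>
    simp only [ceD, AlternatingMap.smul_apply, lie_smul, smul_comm _ c, dite_smul_zero,
      ← Finset.smul_sum, smul_add]

lemma ceD_zero {n : ℕ} (v : Fin (n + 1) → g) :
    ceD k g M (0 : g [⋀^Fin n]→ₗ[k] M) v = 0 := by
  cases n with
  | zero => simp [ceD]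
  | succ n => simp [ceD]

variable (k g M)

/-- The space of Chevalley–Eilenberg `n`-cocycles `Zⁿ(g, M)`. -/
def ceZ (n : ℕ) : Submodule k (g [⋀^Fin n]→ₗ[k] M) where
  carrier := {ψ | ∀ v, ceD k g M ψ v = 0}
  add_mem' := by
    intro ψ φ hψ hφ v
    rw [ceD_add, hψ v, hφ v, add_zero]
  zero_mem' := fun v => ceD_zero v
  smul_mem' := by
    intro c ψ hψ v
    rw [ceD_smul, hψ v, smul_zero]

/-- The space of Chevalley–Eilenberg `n`-coboundaries `Bⁿ(g, M)`: in positive degree, the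
alternating `n`-cochains that agree (as functions) with `dφ` for some `(n-1)`-cochain `φ`. -/
def ceB : (n : ℕ) → Submodule k (g [⋀^Fin n]→ₗ[k] M)
  | 0 => ⊥
  | (n + 1) =>
      { carrier := {ψ | ∃ φ : g [⋀^Fin n]→ₗ[k] M, ∀ v, ψ v = ceD k g M φ v}
        add_mem' := by
          rintro ψ χ ⟨φ₁, h₁⟩ ⟨φ₂, h₂⟩
          exact ⟨φ₁ + φ₂, fun v => by
            rw [AlternatingMap.add_apply, h₁ v, h₂ v, ceD_add]⟩
        zero_mem' := ⟨0, fun v => by rw [AlternatingMap.zero_apply, ceD_zero]⟩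
        smul_mem' := by
          rintro c ψ ⟨φ, h⟩
          exact ⟨c • φ, fun v => by rw [AlternatingMap.smul_apply, h v, ceD_smul]⟩ }

/-- The `n`-th Chevalley–Eilenberg cohomology space `Hⁿ(g, M)`: the quotient of the space of
`n`-cocycles by the space of `n`-coboundaries (viewed inside the cocycles). -/
abbrev ceH (n : ℕ) : Type _ :=
  ↥(ceZ k g M n) ⧸ (ceB k g M n).comap (ceZ k g M n).subtype

end ChevalleyEilenberg

/-- The Lie algebra `sl₃(k)` of traceless `3 × 3` matrices over `k`. -/
abbrev sl3 (k : Type*) [Field k] := ↥(LieAlgebra.SpecialLinear.sl (Fin 3) k)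

/-- The quotient `sl₃(k)/Z(sl₃(k))` of `sl₃(k)` by its center, as a module over `sl₃(k)`
via the action induced by the adjoint action. -/
abbrev sl3ModCenter (k : Type*) [Field k] := (sl3 k) ⧸ LieAlgebra.center k (sl3 k)


namespace SL3H3

/-! ### Sparse linear forms with coefficients in `ℕ`, read modulo 3 -/

/-- A sparse linear form: a list of pairs (variable, coefficient). -/
abbrev Form := List (ℕ × ℕ)

/-- Value of a sparse linear form. -/
def ev {k : Type*} [Field k] : Form → (ℕ → k) → k
  | [], _ => 0
  | p :: l, x => (p.2 : k) * x p.1 + ev l x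

/-- Scale a form. -/
def scale (c : ℕ) : Form → Form
  | [] => []
  | p :: l => (p.1, c * p.2) :: scale c l

/-- Substitute forms for the variables of a form. -/
def subst (f : ℕ → Form) : Form → Form
  | [] => []
  | p :: l => scale p.2 (f p.1) ++ subst f l

/-- Add a single term to a form, merging coefficients. -/
def ins (n c : ℕ) : Form → Form
  | [] => [(n, c)]
  | p :: l => bif Nat.beq p.1 n then (p.1, p.2 + c) :: l else p :: ins n c l

/-- Merge all repeated variables. -/
def merge : Form → Form
  | [] => []
  | p :: l => ins p.1 p.2 (merge l)

/-- All coefficients are divisible by 3. -/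
def allZero : Form → Bool
  | [] => true
  | p :: l => bif Nat.beq (p.2 % 3) 0 then allZero l else false

/-- The form vanishes modulo 3. -/
def isZero (l : Form) : Bool := allZero (merge l)

/-- Table lookup with default the empty form. -/
def look (n : ℕ) : List (ℕ × Form) → Form
  | [] => []
  | p :: l => bif Nat.beq p.1 n then p.2 else look n l

section ev

variable {k : Type*} [Field k]

@[simp] lemma ev_nil (x : ℕ → k) : ev [] x = 0 := rfl

@[simp] lemma ev_cons (p : ℕ × ℕ) (l : Form) (x : ℕ → k) :
    ev (p :: l) x = (p.2 : k) * x p.1 + ev l x := rfl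

@[simp] lemma ev_append (l l' : Form) (x : ℕ → k) : ev (l ++ l') x = ev l x + ev l' x := by
  induction l with
  | nil => simp
  | cons p l ih => simp [ih, add_assoc]

@[simp] lemma ev_scale (c : ℕ) (l : Form) (x : ℕ → k) : ev (scale c l) x = (c : k) * ev l x := by
  induction l with
  | nil => simp [scale]
  | cons p l ih => simp [scale, ih]; ring

@[simp] lemma ev_subst (f : ℕ → Form) (l : Form) (x : ℕ → k) :
    ev (subst f l) x = ev l (fun n => ev (f n) x) := by
  induction l with
  | nil => simp [subst]
  | cons p l ih => simp [subst, ih]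

lemma ev_ins (n c : ℕ) (l : Form) (x : ℕ → k) : ev (ins n c l) x = (c : k) * x n + ev l x := by
  induction l with
  | nil => simp [ins]
  | cons p l ih =>
    rcases h : Nat.beq p.1 n with _ | _
    · simp [ins, h, ih]; ring
    · have := Nat.eq_of_beq_eq_true h
      subst this
      simp [ins]; ring

lemma ev_merge (l : Form) (x : ℕ → k) : ev (merge l) x = ev l x := by
  induction l with
  | nil => rfl
  | cons p l ih => simp [merge, ev_ins, ih]

lemma ev_allZero [CharP k 3] (l : Form) (x : ℕ → k) (h : allZero l = true) : ev l x = 0 := by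
  induction l with
  | nil => rfl
  | cons p l ih =>
    rcases h' : Nat.beq (p.2 % 3) 0 with _ | _
    · simp [allZero, h'] at h
    · have h1 : allZero l = true := by simpa [allZero, h'] using h
      have h2 : (p.2 : k) = 0 :=
        (CharP.cast_eq_zero_iff k 3 p.2).2 (Nat.dvd_of_mod_eq_zero (Nat.eq_of_beq_eq_true h'))
      simp [ih h1, h2]

lemma ev_isZero [CharP k 3] (l : Form) (x : ℕ → k) (h : isZero l = true) : ev l x = 0 := by
  rw [← ev_merge]; exact ev_allZero _ _ h

lemma ev_congr (l : Form) (x y : ℕ → k) (good : ℕ → Bool) (hl : l.all (fun p => good p.1) = true)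
    (hxy : ∀ n, good n = true → x n = y n) : ev l x = ev l y := by
  induction l with
  | nil => rfl
  | cons p l ih =>
    simp only [List.all_cons, Bool.and_eq_true] at hl
    simp [ih hl.2, hxy _ hl.1]

lemma ev_eq_zero (l : Form) (x : ℕ → k) (h : ∀ n, x n = 0) : ev l x = 0 := by
  induction l with
  | nil => rfl
  | cons p l ih => simp [ih, h]

lemma ev_add (l : Form) (x y : ℕ → k) : ev l (fun n => x n + y n) = ev l x + ev l y := by
  induction l with
  | nil => simp
  | cons p l ih => simp [ih]; ring

lemma ev_smul (l : Form) (c : k) (x : ℕ → k) : ev l (fun n => c * x n) = c * ev l x := by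
  induction l with
  | nil => simp
  | cons p l ih => simp [ih]; ring

end ev

/-! ### Tables -/

/-- Structure constants: the entry at `10 a + b` lists the coordinates of `⁅e a, e b⁆`. -/
def brTable : List (ℕ × List (ℕ × ℕ)) :=
  [(2, [(6, 1)]), (3, [(1, 1)]), (4, [(5, 2)]), (6, [(0, 1)]), (12, [(3, 2)]),
   (14, [(6, 2), (7, 2)]), (15, [(0, 1)]), (16, [(1, 2)]), (20, [(6, 2)]), (21, [(3, 1)]),
   (25, [(4, 2)]), (26, [(2, 2)]), (30, [(1, 2)]), (34, [(2, 1)]), (35, [(6, 1), (7, 2)]),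
   (36, [(3, 1)]), (40, [(5, 1)]), (41, [(6, 1), (7, 1)]), (43, [(2, 2)]), (46, [(4, 1)]),
   (51, [(0, 2)]), (52, [(4, 1)]), (53, [(6, 2), (7, 1)]), (56, [(5, 2)]), (60, [(0, 2)]),
   (61, [(1, 1)]), (62, [(2, 1)]), (63, [(3, 2)]), (64, [(4, 2)]), (65, [(5, 1)])]

/-- Action on the quotient: the entry at `10 a + m` is the `m`-th coordinate of `w ↦ ⁅e a, w⁆`. -/
def actTable : List (ℕ × List (ℕ × ℕ)) :=
  [(0, [(6, 1)]), (1, [(3, 1)]), (5, [(4, 2)]), (6, [(2, 1)]), (10, [(5, 1)]), (11, [(6, 2)]),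
   (13, [(2, 2)]), (16, [(4, 2)]), (22, [(6, 2)]), (23, [(1, 1)]), (24, [(5, 2)]),
   (26, [(0, 2)]), (31, [(0, 2)]), (32, [(4, 1)]), (33, [(6, 1)]), (36, [(5, 1)]),
   (42, [(3, 2)]), (44, [(6, 1)]), (45, [(0, 1)]), (46, [(1, 1)]), (50, [(1, 2)]),
   (54, [(2, 1)]), (55, [(6, 2)]), (56, [(3, 2)]), (60, [(0, 2)]), (61, [(1, 1)]),
   (62, [(2, 1)]), (63, [(3, 2)]), (64, [(4, 2)]), (65, [(5, 1)])]

/-- Contracting homotopy from 3-cochains to 2-cochains. -/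
def hTable3 : List (ℕ × List (ℕ × ℕ)) :=
  [(10, [(126, 2), (232, 1), (366, 2)]), (11, [(123, 1), (262, 2), (363, 1)]), (12, [(162, 1)]),
   (13, [(163, 2)]), (14, [(164, 2)]), (15, [(165, 1)]),
   (20, [(340, 1), (1460, 2), (3466, 1), (3560, 1)]), (21, [(261, 1)]), (22, [(262, 1)]),
   (23, [(263, 2)]), (24, [(264, 2)]), (25, [(265, 1)]), (30, [(360, 1)]), (32, [(133, 1)]),
   (33, [(363, 1)]), (34, [(364, 1)]), (35, [(125, 1), (234, 2), (1264, 1)]), (36, [(366, 2)]),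
   (40, [(460, 1)]), (41, [(450, 2), (2452, 2)]), (42, [(151, 1), (454, 1)]), (43, [(463, 1)]),
   (44, [(262, 1), (342, 2), (363, 2), (1462, 2), (3562, 1)]), (46, [(466, 2)]),
   (50, [(455, 2), (466, 1), (4564, 1)]), (51, [(561, 1)]), (52, [(562, 1)]), (53, [(563, 2)]),
   (54, [(564, 2)]), (55, [(565, 1)]), (56, [(151, 1)]), (60, [(244, 1), (255, 1), (465, 2)]),
   (63, [(252, 2), (454, 2), (566, 1)]), (64, [(122, 1), (133, 1), (166, 1)]),
   (70, [(276, 1), (670, 1)]), (71, [(671, 1)]), (72, [(672, 1)]),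
   (73, [(151, 2), (252, 1), (576, 1), (1452, 1)]),
   (74, [(122, 1), (155, 2), (176, 1), (1352, 1)]), (75, [(675, 1)]), (76, [(676, 2)]),
   (121, [(1261, 2)]), (122, [(232, 1), (264, 1), (366, 1)]),
   (123, [(121, 1), (670, 2), (1466, 2)]), (125, [(1265, 2)]), (126, [(1266, 1)]),
   (130, [(1360, 2)]), (131, [(1266, 2), (1346, 1), (1465, 1), (3464, 1), (3676, 1)]),
   (132, [(1362, 1)]), (133, [(1363, 2)]), (134, [(1364, 2)]), (135, [(1365, 1)]),
   (136, [(1232, 1)]), (140, [(1460, 2)]), (141, [(1461, 1)]), (142, [(1462, 1)]),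
   (143, [(1463, 2)]), (144, [(1464, 2)]), (145, [(1465, 1)]),
   (150, [(140, 1), (244, 1), (255, 1), (276, 1), (465, 2), (670, 1)]), (151, [(1561, 2)]),
   (152, [(1562, 2)]), (154, [(155, 2)]), (155, [(1565, 2)]), (156, [(1566, 1)]),
   (161, [(670, 2), (1466, 2)]), (162, [(122, 2), (133, 2)]),
   (165, [(125, 1), (234, 1), (1264, 2)]), (170, [(1670, 2)]),
   (171, [(244, 1), (255, 1), (266, 2), (276, 1), (371, 2), (465, 2), (670, 2), (2352, 1), (2574, 1), (3454, 2), (3576, 1)]),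
   (172, [(122, 2), (155, 1), (1352, 2)]), (173, [(1673, 2)]), (174, [(1674, 2)]),
   (175, [(125, 2), (1232, 2), (1355, 2)]), (176, [(1676, 1)]), (230, [(2360, 2)]),
   (231, [(2361, 1)]), (232, [(236, 1), (265, 2), (360, 2), (1266, 2)]),
   (233, [(2356, 2), (2565, 1), (2676, 2), (3466, 2), (3560, 1)]), (234, [(2364, 2)]),
   (235, [(2365, 1)]), (236, [(1231, 2)]), (240, [(2460, 2)]), (241, [(2461, 1)]),
   (242, [(246, 1), (261, 2), (460, 2), (2566, 2)]), (243, [(2456, 2), (2561, 1), (4560, 1)]),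
   (244, [(2464, 2)]), (245, [(2346, 2), (2361, 1), (3460, 2)]), (250, [(2455, 2)]),
   (251, [(2561, 2)]), (252, [(256, 1), (263, 2), (455, 1), (466, 1), (4564, 2)]),
   (254, [(244, 1)]), (255, [(2565, 2)]), (256, [(2566, 1)]),
   (261, [(240, 2), (2455, 2), (2466, 2)]), (262, [(244, 2), (255, 2), (266, 1), (465, 1)]),
   (265, [(1231, 2), (1245, 2), (2344, 1), (2355, 2)]), (270, [(2670, 2)]),
   (271, [(240, 2), (2343, 1), (2351, 2), (2455, 1), (2466, 2)]), (273, [(2673, 2)]),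
   (274, [(1276, 2), (1670, 2), (3676, 2)]), (275, [(1231, 2), (1245, 2), (2355, 1)]),
   (276, [(2676, 1)]), (340, [(3460, 1)]), (341, [(2343, 1)]),
   (342, [(121, 1), (244, 1), (255, 1), (266, 2), (465, 2), (670, 2), (1242, 1), (1466, 2)]),
   (343, [(261, 2), (341, 1), (460, 2), (1461, 1), (3561, 2)]), (344, [(3464, 1)]),
   (345, [(1231, 2), (2344, 2)]), (346, [(3466, 2)]), (350, [(3560, 2)]), (351, [(3561, 1)]),
   (352, [(3562, 1)]), (353, [(3563, 2)]), (354, [(355, 2), (366, 1), (675, 2), (1565, 1)]),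
   (355, [(3565, 1)]), (356, [(121, 1), (244, 2), (670, 2), (1242, 1), (1466, 2), (2352, 2)]),
   (360, [(1231, 1), (1245, 1), (2344, 2), (2355, 1), (2366, 2)]),
   (363, [(244, 2), (255, 2), (670, 1), (3566, 1)]), (364, [(125, 2), (234, 2), (1264, 2)]),
   (370, [(1231, 1), (1245, 1), (2355, 2), (2376, 2)]), (371, [(3671, 1)]), (372, [(3672, 1)]),
   (373, [(244, 1), (255, 1), (266, 2), (465, 2), (670, 1), (2352, 1), (2574, 1), (3454, 2), (3576, 1)]),
   (374, [(125, 1), (1232, 1), (1274, 1), (1355, 1)]), (375, [(3675, 1)]), (376, [(3676, 2)]),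
   (450, [(4560, 2)]), (451, [(4561, 1)]), (452, [(4562, 1)]), (453, [(4563, 2)]),
   (454, [(4564, 2)]), (455, [(4565, 1)]), (456, [(2452, 2)]), (460, [(240, 1), (2455, 1)]),
   (463, [(243, 1), (450, 2), (2452, 2)]), (470, [(240, 1), (2343, 1), (3450, 1)]),
   (471, [(4671, 1)]), (472, [(476, 1), (671, 1), (5676, 2)]),
   (473, [(243, 1), (450, 2), (3453, 1)]),
   (474, [(244, 2), (255, 2), (266, 1), (465, 1), (2352, 2), (3454, 1)]), (475, [(4675, 1)]),
   (476, [(4676, 2)]), (561, [(243, 2), (450, 1), (2452, 1), (2563, 1)]),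
   (562, [(252, 1), (454, 1)]), (565, [(244, 1), (255, 1)]), (570, [(3571, 2)]),
   (571, [(243, 2), (450, 1), (2573, 1), (3453, 2)]), (572, [(151, 1), (252, 2), (1452, 2)]),
   (573, [(5673, 2)]), (574, [(5674, 2)]),
   (575, [(244, 2), (255, 2), (266, 1), (465, 1), (2352, 2), (2574, 2), (3454, 1)]),
   (576, [(5676, 1)]), (676, [(670, 1)])]

/-- Contracting homotopy from 4-cochains to 3-cochains. -/
def hTable4 : List (ℕ × List (ℕ × ℕ)) :=
  [(120, [(1260, 2)]), (124, [(1232, 2), (1366, 1)]), (130, [(1236, 2), (12362, 1)]),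
   (131, [(1233, 1)]), (132, [(1362, 1)]), (135, [(1234, 2)]), (136, [(1366, 2)]),
   (141, [(1461, 1)]), (142, [(1462, 1)]), (143, [(1456, 1)]),
   (144, [(1254, 1), (1356, 1), (1565, 1)]),
   (145, [(1255, 1), (2362, 2), (3565, 1), (12564, 1)]),
   (146, [(1242, 2), (2672, 2), (12562, 2)]), (150, [(1263, 2), (1560, 2)]), (153, [(1563, 2)]),
   (154, [(1564, 2)]), (156, [(1566, 1)]), (160, [(1233, 1), (1361, 2)]), (161, [(1263, 1)]),
   (170, [(1670, 2)]), (171, [(1671, 1)]), (172, [(1574, 1)]), (173, [(1673, 2)]),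
   (174, [(1372, 1)]), (175, [(1675, 1)]), (230, [(2345, 2), (23464, 1)]),
   (231, [(2361, 1), (3460, 1), (23566, 1)]),
   (233, [(1460, 1), (2342, 1), (2464, 2), (2676, 1), (12462, 1), (12566, 2)]),
   (235, [(2365, 1)]), (241, [(2450, 1)]), (242, [(2454, 2)]), (245, [(2465, 1), (3460, 2)]),
   (250, [(2560, 2)]), (251, [(2456, 1), (24562, 2)]), (253, [(2563, 2)]),
   (254, [(2564, 2), (3462, 1)]), (260, [(3460, 1)]), (270, [(2670, 2)]), (271, [(2671, 1)]),
   (272, [(2672, 1)]), (273, [(2673, 2)]), (274, [(2674, 2)]), (275, [(2675, 1), (12676, 2)]),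
   (343, [(3463, 1)]), (344, [(3464, 1), (3565, 1)]), (345, [(3465, 2)]),
   (350, [(1246, 1), (1250, 2), (1460, 1)]),
   (351, [(1251, 2), (1461, 1), (2454, 1), (2462, 1), (12563, 1)]), (352, [(3562, 1)]),
   (353, [(1253, 2), (1456, 1), (1561, 1)]), (354, [(1356, 1)]), (356, [(3566, 2)]),
   (361, [(1261, 2), (1460, 1), (2464, 2), (12566, 2)]), (362, [(1262, 2)]), (365, [(1265, 2)]),
   (370, [(3670, 1)]), (372, [(1373, 1)]), (373, [(3673, 1)]), (374, [(3674, 1)]),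
   (375, [(1370, 2), (12372, 1)]), (376, [(3676, 2)]), (451, [(2453, 2)]), (452, [(4562, 1)]),
   (456, [(4566, 2)]), (461, [(2463, 2)]), (462, [(2562, 2)]), (464, [(3462, 2)]),
   (470, [(4670, 1), (35671, 1)]), (471, [(4570, 2), (24572, 2)]), (472, [(4574, 1)]),
   (473, [(4673, 1)]), (474, [(4674, 1)]),
   (475, [(2575, 2), (2676, 1), (12472, 2), (13473, 2), (35676, 1)]), (560, [(4565, 2)]),
   (570, [(5670, 2)]), (571, [(5671, 1)]), (572, [(1573, 1)]), (573, [(4572, 1)]),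
   (574, [(5674, 2)]), (575, [(5675, 1)]), (673, [(1561, 1), (3563, 1)]),
   (674, [(1474, 2), (1575, 2)]), (1230, [(12360, 2)]),
   (1233, [(2366, 2), (12363, 2), (13466, 2)]), (1234, [(1235, 2)]), (1236, [(12366, 1)]),
   (1240, [(2340, 1), (23560, 1)]), (1241, [(2341, 1), (23463, 1)]),
   (1243, [(2343, 1), (23563, 1)]), (1244, [(12464, 2), (12676, 1)]), (1246, [(12466, 1)]),
   (1250, [(3460, 2), (12560, 1)]), (1251, [(12561, 2)]), (1252, [(12562, 2)]),
   (1253, [(2454, 1), (2462, 1), (12563, 1)]), (1254, [(2362, 2), (3565, 1), (12564, 1)]),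
   (1255, [(12565, 2)]), (1256, [(1246, 1)]), (1260, [(2360, 1)]), (1262, [(2362, 1)]),
   (1263, [(1460, 1), (2464, 2), (12566, 2)]), (1270, [(12371, 2)]), (1271, [(12671, 2)]),
   (1272, [(12672, 2)]), (1273, [(2575, 2), (3570, 1), (12472, 2), (14575, 2), (23572, 1)]),
   (1275, [(12675, 2)]), (1340, [(12346, 1)]), (1341, [(13461, 1)]),
   (1342, [(2362, 2), (13462, 1)]),
   (1343, [(1261, 2), (1341, 1), (1460, 1), (2464, 2), (12566, 2)]), (1344, [(12354, 2)]),
   (1345, [(13465, 1)]), (1350, [(13466, 2), (13560, 2)]), (1353, [(13563, 2)]),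
   (1354, [(13564, 2)]), (1356, [(3565, 2), (13566, 1)]), (1361, [(13466, 1)]),
   (1366, [(12362, 1)]), (1370, [(13670, 2)]), (1371, [(13671, 1)]), (1372, [(13672, 1)]),
   (1373, [(13673, 2)]), (1374, [(13674, 2)]), (1375, [(13675, 1)]), (1376, [(12372, 1)]),
   (1450, [(14560, 2), (35671, 2)]), (1451, [(12453, 2)]), (1453, [(14563, 2)]),
   (1454, [(3462, 2), (14564, 2)]), (1455, [(1246, 2), (2464, 1), (12454, 1)]),
   (1456, [(14566, 1)]), (1470, [(14670, 2)]), (1471, [(14671, 1)]), (1472, [(14672, 1)]),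
   (1473, [(4676, 2), (14673, 2)]), (1474, [(14674, 2)]), (1475, [(14675, 1)]),
   (1476, [(2575, 2), (3570, 1), (14575, 2)]), (1560, [(1460, 1)]), (1563, [(1561, 1)]),
   (1564, [(1565, 2)]), (1570, [(3570, 2)]), (1571, [(15671, 2)]), (1572, [(15672, 2)]),
   (1573, [(1571, 1)]), (1574, [(1575, 2)]), (1575, [(15675, 2)]), (1576, [(15676, 1)]),
   (1671, [(3570, 1), (13571, 1)]), (1672, [(1474, 1), (1575, 1), (1676, 1)]),
   (1675, [(12372, 1), (13474, 2), (13676, 2)]), (2341, [(23461, 1)]),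
   (2342, [(23462, 1), (23566, 2)]), (2345, [(23465, 1)]), (2350, [(23560, 2)]),
   (2353, [(3461, 1), (23563, 2)]), (2354, [(2366, 1), (12676, 2), (23564, 2)]),
   (2362, [(2366, 1)]), (2363, [(23566, 2)]), (2370, [(23475, 1)]), (2371, [(23671, 1)]),
   (2372, [(12676, 2), (23672, 1)]), (2373, [(23673, 2)]), (2374, [(23674, 2)]),
   (2375, [(12370, 1)]), (2450, [(24560, 2)]), (2453, [(2451, 1)]),
   (2454, [(2466, 1), (24564, 2)]), (2462, [(2466, 1)]), (2463, [(24566, 2)]),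
   (2465, [(23466, 2)]), (2470, [(23471, 1)]), (2471, [(24570, 2)]), (2472, [(24672, 1)]),
   (2473, [(24673, 2)]), (2474, [(24674, 2)]), (2475, [(24675, 1)]), (2476, [(23456, 2)]),
   (2560, [(24565, 2)]), (2562, [(2454, 1), (2462, 1)]), (2564, [(2464, 1)]),
   (2570, [(23456, 1), (24575, 2)]), (2571, [(25671, 2)]), (2572, [(4676, 1), (25672, 2)]),
   (2575, [(25675, 2)]), (2576, [(23573, 2), (34673, 1)]), (2671, [(12471, 1), (23473, 2)]),
   (2672, [(2676, 1)]), (2674, [(12676, 2)]), (2675, [(23464, 1), (23565, 1)]),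
   (3451, [(34561, 1)]), (3452, [(2454, 1), (2462, 1), (4676, 1), (34562, 1)]),
   (3455, [(34565, 1)]), (3456, [(3461, 2), (34566, 2)]), (3461, [(23463, 1)]),
   (3462, [(1460, 1), (2464, 2), (2676, 1), (12462, 1), (12566, 2)]), (3463, [(3461, 1)]),
   (3465, [(23464, 2)]), (3470, [(34670, 1)]), (3471, [(23456, 2), (23473, 1)]),
   (3472, [(2676, 2), (23572, 1)]), (3473, [(34673, 1)]), (3474, [(12676, 2), (34674, 1)]),
   (3475, [(23474, 2)]), (3476, [(34676, 2)]), (3564, [(3565, 2)]), (3570, [(35670, 2)]),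
   (3572, [(35672, 1)]), (3573, [(35673, 2)]), (3574, [(35674, 2)]), (3575, [(35675, 1)]),
   (3670, [(23464, 2), (23565, 2), (23676, 2)]), (3673, [(2676, 2), (12472, 1), (13473, 1)]),
   (3674, [(12372, 2), (13474, 1)]), (4566, [(24562, 2)]), (4570, [(45670, 2)]),
   (4571, [(45671, 1)]), (4572, [(45672, 1)]), (4573, [(45673, 2)]),
   (4574, [(4575, 2), (5670, 1)]), (4575, [(23573, 1), (24574, 2), (24672, 1), (34673, 2)]),
   (4576, [(24572, 2)]), (4670, [(12471, 2), (23473, 1), (24676, 2)]), (4672, [(4676, 1)]),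
   (4673, [(4570, 1), (4671, 1), (14571, 1)]), (4674, [(3570, 2), (13571, 2), (14676, 2)]),
   (5670, [(35671, 2)]), (5671, [(4570, 2), (14571, 2)]),
   (5672, [(1561, 2), (3563, 2), (4672, 1)]),
   (5675, [(2676, 1), (12472, 2), (13473, 2), (35676, 1)])]

/-- The eight linear functionals on 3-cochains that separate cohomology classes. -/
def projTable : List (ℕ × List (ℕ × ℕ)) :=
  [(0, [(134, 1)]), (1, [(152, 1)]), (2, [(1235, 1)]),
   (3, [(121, 1), (255, 2), (266, 1), (346, 1), (465, 1), (670, 2), (1242, 1), (1466, 2), (2352, 1)]),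
   (4, [(121, 1), (140, 2), (244, 2), (266, 2), (371, 2), (670, 1), (1242, 1), (1351, 1), (2574, 1), (3454, 2), (3576, 1)]),
   (5, [(453, 1)]), (6, [(2340, 1)]), (7, [(2451, 1)])]

/-- Coordinates of the eight representing 3-cocycles. -/
def reprTable : List (ℕ × List (ℕ × ℕ)) :=
  [(134, [(0, 1)]), (152, [(1, 1)]), (233, [(3, 2)]), (346, [(3, 1)]), (350, [(3, 1)]),
   (453, [(5, 1)]), (1235, [(2, 1)]), (1256, [(3, 1)]), (1343, [(3, 2), (4, 2)]),
   (1351, [(4, 1)]), (1455, [(3, 2)]), (2340, [(6, 1)]), (2451, [(7, 1)])]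

/-- Structure constants of `sl₃` in characteristic 3. -/
def br (a b : Fin 8) : Form := look (10 * a.val + b.val) brTable

/-- Action of `sl₃` on coordinates of the quotient by the center. -/
def act (a : Fin 8) (m : Fin 7) : Form := look (10 * a.val + m.val) actTable

/-- Homotopy, degree 3 to 2. -/
def hom3 (n : ℕ) : Form := look n hTable3
/-- Homotopy, degree 4 to 3. -/
def hom4 (n : ℕ) : Form := look n hTable4
/-- Separating functionals. -/
def prj (n : ℕ) : Form := look (n % 8) projTable
/-- Representatives. -/
def rep (n : ℕ) : Form := look n reprTable

/-- Element of `Fin 8` with value `n`, reduced modulo 8. -/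
def f8 (n : ℕ) : Fin 8 := Fin.ofNat 8 n
/-- Element of `Fin 7` with value `n`, reduced modulo 7. -/
def f7 (n : ℕ) : Fin 7 := Fin.ofNat 7 n

/-- Key of a coordinate of a 2-cochain. -/
def key2 (a b : Fin 8) (m : Fin 7) : ℕ := 100 * a.val + 10 * b.val + m.val
/-- Key of a coordinate of a 3-cochain. -/
def key3 (a b c : Fin 8) (m : Fin 7) : ℕ := 1000 * a.val + 100 * b.val + 10 * c.val + m.val

/-- The coordinate `m` of `φ(e a, e b)` in terms of increasing pairs. -/
def nrm2 (a b : Fin 8) (m : Fin 7) : Form :=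
  if a < b then [(key2 a b m, 1)] else if b < a then [(key2 b a m, 2)] else []

/-- The coordinate `m` of `ψ(e a, e b, e c)` in terms of increasing triples. -/
def nrm3 (a b c : Fin 8) (m : Fin 7) : Form :=
  if a < b then
    if b < c then [(key3 a b c m, 1)]
    else if a < c then if c < b then [(key3 a c b m, 2)] else []
    else if c < a then [(key3 c a b m, 1)] else []
  else if b < a then
    if a < c then [(key3 b a c m, 2)]
    else if b < c then if c < a then [(key3 b c a m, 1)] else []
    else if c < b then [(key3 c b a m, 2)] else []
  else []

/-- The differential from 2-cochains to 3-cochains, in coordinates. -/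
def row2 (a b c : Fin 8) (m : Fin 7) : Form :=
  scale 2 (subst (fun e => nrm2 (f8 e) c m) (br a b)) ++
  (subst (fun e => nrm2 (f8 e) b m) (br a c) ++
  (scale 2 (subst (fun e => nrm2 (f8 e) a m) (br b c)) ++
  (subst (fun l => nrm2 b c (f7 l)) (act a m) ++
  (scale 2 (subst (fun l => nrm2 a c (f7 l)) (act b m)) ++
  subst (fun l => nrm2 a b (f7 l)) (act c m)))))

/-- The differential from 3-cochains to 4-cochains, in coordinates. -/
def row3 (a b c d : Fin 8) (m : Fin 7) : Form :=
  scale 2 (subst (fun e => nrm3 (f8 e) c d m) (br a b)) ++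
  (subst (fun e => nrm3 (f8 e) b d m) (br a c) ++
  (scale 2 (subst (fun e => nrm3 (f8 e) b c m) (br a d)) ++
  (scale 2 (subst (fun e => nrm3 (f8 e) a d m) (br b c)) ++
  (subst (fun e => nrm3 (f8 e) a c m) (br b d) ++
  (scale 2 (subst (fun e => nrm3 (f8 e) a b m) (br c d)) ++
  (subst (fun l => nrm3 b c d (f7 l)) (act a m) ++
  (scale 2 (subst (fun l => nrm3 a c d (f7 l)) (act b m)) ++
  (subst (fun l => nrm3 a b d (f7 l)) (act c m) ++
  scale 2 (subst (fun l => nrm3 a b c (f7 l)) (act d m))))))))))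

/-- `row2` indexed by keys. -/
def row2' (n : ℕ) : Form := row2 (f8 (n / 1000)) (f8 (n / 100 % 10)) (f8 (n / 10 % 10)) (f7 (n % 10))

/-- `row3` indexed by keys. -/
def row3' (n : ℕ) : Form :=
  row3 (f8 (n / 10000)) (f8 (n / 1000 % 10)) (f8 (n / 100 % 10)) (f8 (n / 10 % 10)) (f7 (n % 10))

/-- The key encodes an increasing pair. -/
def good2 (n : ℕ) : Bool :=
  Nat.blt (n / 100) (n / 10 % 10) && Nat.blt (n / 10 % 10) 8 && Nat.blt (n % 10) 7

/-- The key encodes an increasing triple. -/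
def good3 (n : ℕ) : Bool :=
  Nat.blt (n / 1000) (n / 100 % 10) && Nat.blt (n / 100 % 10) (n / 10 % 10) &&
    Nat.blt (n / 10 % 10) 8 && Nat.blt (n % 10) 7

/-- The homotopy identity at one coordinate. -/
def homCheck (a b c : Fin 8) (m : Fin 7) : Bool :=
  isZero ((key3 a b c m, 2) :: (subst hom3 (row2 a b c m) ++
    (subst row3' (hom4 (key3 a b c m)) ++ subst prj (rep (key3 a b c m)))))

lemma homCheck_all : ∀ a b : Fin 8, a < b → ∀ c : Fin 8, b < c → ∀ m : Fin 7,
    homCheck a b c m = true := by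
  decide +kernel

lemma good2_row2 : ∀ a b : Fin 8, a < b → ∀ c : Fin 8, b < c → ∀ m : Fin 7,
    (row2 a b c m).all (fun p => good2 p.1) = true := by
  decide +kernel

lemma good3_row3 : ∀ a b : Fin 8, a < b → ∀ c : Fin 8, b < c → ∀ d : Fin 8, c < d → ∀ m : Fin 7,
    (row3 a b c d m).all (fun p => good3 p.1) = true := by
  decide +kernel

lemma cocycle_rep : ∀ a b : Fin 8, a < b → ∀ c : Fin 8, b < c → ∀ d : Fin 8, c < d → ∀ m : Fin 7,
    isZero (subst rep (row3 a b c d m)) = true := by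
  decide +kernel

lemma prj_row2 : ∀ t : Fin 8, isZero (subst row2' (prj t.val)) = true := by
  decide +kernel

lemma good3_prj : ∀ t : Fin 8, (prj t.val).all (fun p => good3 p.1) = true := by
  decide +kernel

lemma prj_rep : ∀ t : Fin 8, isZero ((t.val, 2) :: subst rep (prj t.val)) = true := by
  decide +kernel


/-! ### Alternating maps in terms of a basis -/

section alternating

set_option linter.unusedSectionVars false

open Module

variable {k : Type*} [Field k]
variable {g : Type*} [LieRing g] [LieAlgebra k g]
variable {M : Type*} [AddCommGroup M] [Module k M] [LieRingModule g M] [LieModule k g M]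

lemma alt_ext {n : ℕ} (e : Basis (Fin 8) k g) (f f' : g [⋀^Fin n]→ₗ[k] M)
    (h : ∀ s : Fin n ↪o Fin 8, f (e ∘ s) = f' (e ∘ s)) : f = f' := by
  apply (exteriorPower.alternatingMapLinearEquiv (R := k) (M := g) (N := M) (n := n)).injective
  apply (e.exteriorPower n).ext
  intro s
  rw [exteriorPower.basis_apply, exteriorPower.ιMulti_family,
    exteriorPower.alternatingMapLinearEquiv_apply_ιMulti,
    exteriorPower.alternatingMapLinearEquiv_apply_ιMulti]
  exact h _

lemma alt_exists {n : ℕ} (e : Basis (Fin 8) k g) (y : (Fin n ↪o Fin 8) → M) :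
    ∃ f : g [⋀^Fin n]→ₗ[k] M, ∀ s : Fin n ↪o Fin 8, f (e ∘ s) = y s := by
  refine ⟨exteriorPower.alternatingMapLinearEquiv.symm
    ((e.exteriorPower n).constr k (fun s => y (Set.powersetCard.ofFinEmbEquiv.symm s))), ?_⟩
  intro s
  have h : exteriorPower.ιMulti k n (e ∘ s) =
      e.exteriorPower n (Set.powersetCard.ofFinEmbEquiv s) := by
    rw [exteriorPower.basis_apply, exteriorPower.ιMulti_family, Equiv.symm_apply_apply]
  rw [exteriorPower.alternatingMapLinearEquiv_symm_apply, LinearMap.compAlternatingMap_apply, h,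
    Basis.constr_basis, Equiv.symm_apply_apply]

lemma comp_two (e : Fin 8 → g) (s : Fin 2 → Fin 8) : e ∘ s = ![e (s 0), e (s 1)] := by
  funext i; fin_cases i <;> rfl

lemma comp_three (e : Fin 8 → g) (s : Fin 3 → Fin 8) :
    e ∘ s = ![e (s 0), e (s 1), e (s 2)] := by
  funext i; fin_cases i <;> rfl

lemma comp_four (e : Fin 8 → g) (s : Fin 4 → Fin 8) :
    e ∘ s = ![e (s 0), e (s 1), e (s 2), e (s 3)] := by
  funext i; fin_cases i <;> rfl

lemma alt_exists2 (e : Basis (Fin 8) k g) (y : Fin 8 → Fin 8 → M) :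
    ∃ f : g [⋀^Fin 2]→ₗ[k] M, ∀ a b, a < b → f ![e a, e b] = y a b := by
  obtain ⟨f, hf⟩ := alt_exists e (fun s : Fin 2 ↪o Fin 8 => y (s 0) (s 1))
  refine ⟨f, fun a b hab => ?_⟩
  have hs : StrictMono ![a, b] := by
    rw [Fin.strictMono_iff_lt_succ]; intro i; fin_cases i; simpa using hab
  have := hf (OrderEmbedding.ofStrictMono _ hs)
  rw [comp_two] at this
  simpa using this

lemma alt_exists3 (e : Basis (Fin 8) k g) (y : Fin 8 → Fin 8 → Fin 8 → M) :
    ∃ f : g [⋀^Fin 3]→ₗ[k] M, ∀ a b c, a < b → b < c → f ![e a, e b, e c] = y a b c := by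
  obtain ⟨f, hf⟩ := alt_exists e (fun s : Fin 3 ↪o Fin 8 => y (s 0) (s 1) (s 2))
  refine ⟨f, fun a b c hab hbc => ?_⟩
  have hs : StrictMono ![a, b, c] := by
    rw [Fin.strictMono_iff_lt_succ]; intro i; fin_cases i
    · simpa using hab
    · simpa using hbc
  have := hf (OrderEmbedding.ofStrictMono _ hs)
  rw [comp_three] at this
  simpa using this

lemma swap2 (φ : g [⋀^Fin 2]→ₗ[k] M) (a b : g) : φ ![b, a] = - φ ![a, b] := by
  have := φ.map_swap ![a, b] (i := 0) (j := 1) (by decide)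
  rw [← this]; congr 1; funext i; fin_cases i <;> rfl

lemma eq2 (φ : g [⋀^Fin 2]→ₗ[k] M) (a : g) : φ ![a, a] = 0 :=
  φ.map_eq_zero_of_eq _ (i := 0) (j := 1) rfl (by decide)

lemma swap3 (φ : g [⋀^Fin 3]→ₗ[k] M) (a b c : g) : φ ![b, a, c] = - φ ![a, b, c] := by
  have := φ.map_swap ![a, b, c] (i := 0) (j := 1) (by decide)
  rw [← this]; congr 1; funext i; fin_cases i <;> rfl

lemma swap3' (φ : g [⋀^Fin 3]→ₗ[k] M) (a b c : g) : φ ![a, c, b] = - φ ![a, b, c] := by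
  have := φ.map_swap ![a, b, c] (i := 1) (j := 2) (by decide)
  rw [← this]; congr 1; funext i; fin_cases i <;> rfl

lemma eq3 (φ : g [⋀^Fin 3]→ₗ[k] M) (a b : g) : φ ![a, a, b] = 0 :=
  φ.map_eq_zero_of_eq _ (i := 0) (j := 1) rfl (by decide)

lemma eq3' (φ : g [⋀^Fin 3]→ₗ[k] M) (a b : g) : φ ![b, a, a] = 0 :=
  φ.map_eq_zero_of_eq _ (i := 1) (j := 2) rfl (by decide)

lemma eq3'' (φ : g [⋀^Fin 3]→ₗ[k] M) (a b : g) : φ ![a, b, a] = 0 :=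
  φ.map_eq_zero_of_eq _ (i := 0) (j := 2) rfl (by decide)

lemma ceD_two (φ : g [⋀^Fin 2]→ₗ[k] M) (v : Fin 3 → g) :
    ceD k g M φ v = - φ ![⁅v 0, v 1⁆, v 2] + φ ![⁅v 0, v 2⁆, v 1] - φ ![⁅v 1, v 2⁆, v 0]
      + ⁅v 0, φ ![v 1, v 2]⁆ - ⁅v 1, φ ![v 0, v 2]⁆ + ⁅v 2, φ ![v 0, v 1]⁆ := by
  obtain ⟨F, hF⟩ : ∃ F : g → g → M, ∀ w, φ w = F (w 0) (w 1) :=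
    ⟨fun a b => φ ![a, b], fun w => by congr 1; funext i; fin_cases i <;> rfl⟩
  have s3 : ∀ f : Fin (1 + 2) → M, ∑ i, f i = f (0 : Fin 3) + f (1 : Fin 3) + f (2 : Fin 3) :=
    Fin.sum_univ_three
  simp only [ceD, s3]
  simp only [hF]
  change ((0 + (-1 : ℤ) ^ (0 + 1) • F ⁅v 0, v 1⁆ (v 2) + (-1 : ℤ) ^ (0 + 2) • F ⁅v 0, v 2⁆ (v 1))
        + (0 + 0 + (-1 : ℤ) ^ (1 + 2) • F ⁅v 1, v 2⁆ (v 0))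
        + (0 + 0 + 0))
        + ((-1 : ℤ) ^ 0 • ⁅v 0, F (v 1) (v 2)⁆
        + (-1 : ℤ) ^ 1 • ⁅v 1, F (v 0) (v 2)⁆
        + (-1 : ℤ) ^ 2 • ⁅v 2, F (v 0) (v 1)⁆) =
        - F ⁅v 0, v 1⁆ (v 2)
         + F ⁅v 0, v 2⁆ (v 1)
         - F ⁅v 1, v 2⁆ (v 0)
         + ⁅v 0, F (v 1) (v 2)⁆
         - ⁅v 1, F (v 0) (v 2)⁆
         + ⁅v 2, F (v 0) (v 1)⁆
  simp
  abel

lemma ceD_three (φ : g [⋀^Fin 3]→ₗ[k] M) (v : Fin 4 → g) :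
    ceD k g M φ v = - φ ![⁅v 0, v 1⁆, v 2, v 3] + φ ![⁅v 0, v 2⁆, v 1, v 3]
      - φ ![⁅v 0, v 3⁆, v 1, v 2] - φ ![⁅v 1, v 2⁆, v 0, v 3] + φ ![⁅v 1, v 3⁆, v 0, v 2]
      - φ ![⁅v 2, v 3⁆, v 0, v 1]
      + ⁅v 0, φ ![v 1, v 2, v 3]⁆ - ⁅v 1, φ ![v 0, v 2, v 3]⁆ + ⁅v 2, φ ![v 0, v 1, v 3]⁆
      - ⁅v 3, φ ![v 0, v 1, v 2]⁆ := by
  obtain ⟨F, hF⟩ : ∃ F : g → g → g → M, ∀ w, φ w = F (w 0) (w 1) (w 2) :=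
    ⟨fun a b c => φ ![a, b, c], fun w => by congr 1; funext i; fin_cases i <;> rfl⟩
  have s4 : ∀ f : Fin (2 + 2) → M,
      ∑ i, f i = f (0 : Fin 4) + f (1 : Fin 4) + f (2 : Fin 4) + f (3 : Fin 4) :=
    Fin.sum_univ_four
  simp only [ceD, s4]
  simp only [hF]
  change ((0 + (-1 : ℤ) ^ (0 + 1) • F ⁅v 0, v 1⁆ (v 2) (v 3) + (-1 : ℤ) ^ (0 + 2) • F ⁅v 0, v 2⁆ (v 1) (v 3) + (-1 : ℤ) ^ (0 + 3) • F ⁅v 0, v 3⁆ (v 1) (v 2))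
        + (0 + 0 + (-1 : ℤ) ^ (1 + 2) • F ⁅v 1, v 2⁆ (v 0) (v 3) + (-1 : ℤ) ^ (1 + 3) • F ⁅v 1, v 3⁆ (v 0) (v 2))
        + (0 + 0 + 0 + (-1 : ℤ) ^ (2 + 3) • F ⁅v 2, v 3⁆ (v 0) (v 1))
        + (0 + 0 + 0 + 0))
        + ((-1 : ℤ) ^ 0 • ⁅v 0, F (v 1) (v 2) (v 3)⁆
        + (-1 : ℤ) ^ 1 • ⁅v 1, F (v 0) (v 2) (v 3)⁆
        + (-1 : ℤ) ^ 2 • ⁅v 2, F (v 0) (v 1) (v 3)⁆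
        + (-1 : ℤ) ^ 3 • ⁅v 3, F (v 0) (v 1) (v 2)⁆) =
        - F ⁅v 0, v 1⁆ (v 2) (v 3)
         + F ⁅v 0, v 2⁆ (v 1) (v 3)
         - F ⁅v 0, v 3⁆ (v 1) (v 2)
         - F ⁅v 1, v 2⁆ (v 0) (v 3)
         + F ⁅v 1, v 3⁆ (v 0) (v 2)
         - F ⁅v 2, v 3⁆ (v 0) (v 1)
         + ⁅v 0, F (v 1) (v 2) (v 3)⁆
         - ⁅v 1, F (v 0) (v 2) (v 3)⁆
         + ⁅v 2, F (v 0) (v 1) (v 3)⁆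
         - ⁅v 3, F (v 0) (v 1) (v 2)⁆
  simp
  abel

/-- The action part of the differential, as an alternating map. -/
noncomputable def actPart {n : ℕ} (φ : g [⋀^Fin n]→ₗ[k] M) : g [⋀^Fin (n + 1)]→ₗ[k] M :=
  AlternatingMap.alternatizeUncurryFin
    { toFun := fun x => (LieModule.toEnd k g M x).compAlternatingMap φ
      map_add' := fun x y => by ext v; simp
      map_smul' := fun c x => by ext v; simp }

/-- Twice the bracket part of the differential (up to sign), as an alternating map. -/
noncomputable def brPart {n : ℕ} (φ : g [⋀^Fin (n + 1)]→ₗ[k] M) : g [⋀^Fin (n + 2)]→ₗ[k] M :=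
  AlternatingMap.alternatizeUncurryFin
    (AlternatingMap.alternatizeUncurryFinLM ∘ₗ
      { toFun := fun x => φ.curryLeft ∘ₗ (LieAlgebra.ad k g x)
        map_add' := fun x y => by ext v; simp
        map_smul' := fun c x => by ext v; simp })

lemma three_smul_zero [CharP k 3] (w : M) : (3 : ℤ) • w = 0 := by
  have h : ((3 : ℕ) : k) = 0 := CharP.cast_eq_zero k 3
  have h2 : ((3 : ℕ) : k) • w = (3 : ℕ) • w := Nat.cast_smul_eq_nsmul k 3 w
  rw [h, zero_smul] at h2
  have h3 : (3 : ℤ) • w = (3 : ℕ) • w := by simpa using natCast_zsmul w 3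
  rw [h3, ← h2]

lemma neg_cons (n : ℕ) (φ : g [⋀^Fin (n + 1)]→ₗ[k] M) (a b : g) (v : Fin n → g) :
    φ (Matrix.vecCons ⁅b, a⁆ v) = - φ (Matrix.vecCons ⁅a, b⁆ v) := by
  have h := φ.curryLeft.map_neg ⁅a, b⁆
  have h2 := congrArg (fun f => f v) h
  simpa using h2

lemma exists_ceD_two [CharP k 3] (φ : g [⋀^Fin 2]→ₗ[k] M) :
    ∃ D : g [⋀^Fin 3]→ₗ[k] M, ∀ v, D v = ceD k g M φ v := by
  refine ⟨brPart φ + actPart φ, fun v => ?_⟩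
  obtain ⟨F, hF⟩ : ∃ F : g → g → M, ∀ w, φ w = F (w 0) (w 1) :=
    ⟨fun a b => φ ![a, b], fun w => by congr 1; funext i; fin_cases i <;> rfl⟩
  have s3 : ∀ f : Fin (1 + 1 + 1) → M,
      ∑ i, f i = f (0 : Fin 3) + f (1 : Fin 3) + f (2 : Fin 3) :=
    Fin.sum_univ_three
  have s2 : ∀ f : Fin (1 + 1) → M, ∑ i, f i = f (0 : Fin 2) + f (1 : Fin 2) :=
    Fin.sum_univ_two
  rw [ceD_two]
  simp only [AlternatingMap.add_apply, brPart, actPart, AlternatingMap.alternatizeUncurryFin_apply,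
    s3, s2, LinearMap.comp_apply, LinearMap.coe_mk, AddHom.coe_mk,
    AlternatingMap.alternatizeUncurryFinLM_apply, LinearMap.compAlternatingMap_apply,
    LieModule.toEnd_apply_apply, AlternatingMap.curryLeft_apply_apply, LieAlgebra.ad_apply]
  simp only [hF]
  change ((-1 : ℤ) ^ 0 • ((-1 : ℤ) ^ 0 • F ⁅v 0, v 1⁆ (v 2) + (-1 : ℤ) ^ 1 • F ⁅v 0, v 2⁆ (v 1))
        + (-1 : ℤ) ^ 1 • ((-1 : ℤ) ^ 0 • F ⁅v 1, v 0⁆ (v 2) + (-1 : ℤ) ^ 1 • F ⁅v 1, v 2⁆ (v 0))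
        + (-1 : ℤ) ^ 2 • ((-1 : ℤ) ^ 0 • F ⁅v 2, v 0⁆ (v 1) + (-1 : ℤ) ^ 1 • F ⁅v 2, v 1⁆ (v 0)))
        + ((-1 : ℤ) ^ 0 • ⁅v 0, F (v 1) (v 2)⁆
        + (-1 : ℤ) ^ 1 • ⁅v 1, F (v 0) (v 2)⁆
        + (-1 : ℤ) ^ 2 • ⁅v 2, F (v 0) (v 1)⁆) =
        - F ⁅v 0, v 1⁆ (v 2)
         + F ⁅v 0, v 2⁆ (v 1)
         - F ⁅v 1, v 2⁆ (v 0)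
         + ⁅v 0, F (v 1) (v 2)⁆
         - ⁅v 1, F (v 0) (v 2)⁆
         + ⁅v 2, F (v 0) (v 1)⁆
  rw [← sub_eq_zero]
  have hn : ∀ a b c, F ⁅b, a⁆ c = - F ⁅a, b⁆ c := by
    intro a b c
    have := neg_cons 1 φ a b ![c]
    rwa [hF, hF] at this
  have n1 : F ⁅v 1, v 0⁆ (v 2) = - F ⁅v 0, v 1⁆ (v 2) := hn _ _ (v 2)
  have n2 : F ⁅v 2, v 0⁆ (v 1) = - F ⁅v 0, v 2⁆ (v 1) := hn _ _ (v 1)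
  have n3 : F ⁅v 2, v 1⁆ (v 0) = - F ⁅v 1, v 2⁆ (v 0) := hn _ _ (v 0)
  have h1 := three_smul_zero (k := k) (F ⁅v 0, v 1⁆ (v 2))
  have h2 := three_smul_zero (k := k) (F ⁅v 0, v 2⁆ (v 1))
  have h3 := three_smul_zero (k := k) (F ⁅v 1, v 2⁆ (v 0))
  rw [n1, n2, n3]
  simp only [pow_zero, one_smul, neg_smul, pow_succ, mul_neg, mul_one, neg_neg,
    neg_add, smul_neg]
  refine Eq.trans ?_ ((congrArg₂ (· + ·) (congrArg₂ (· - ·) h1 h2) h3).trans (by simp))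
  abel

lemma exists_ceD_three [CharP k 3] (φ : g [⋀^Fin 3]→ₗ[k] M) :
    ∃ D : g [⋀^Fin 4]→ₗ[k] M, ∀ v, D v = ceD k g M φ v := by
  refine ⟨brPart φ + actPart φ, fun v => ?_⟩
  obtain ⟨F, hF⟩ : ∃ F : g → g → g → M, ∀ w, φ w = F (w 0) (w 1) (w 2) :=
    ⟨fun a b c => φ ![a, b, c], fun w => by congr 1; funext i; fin_cases i <;> rfl⟩
  have s4 : ∀ f : Fin (2 + 1 + 1) → M,
      ∑ i, f i = f (0 : Fin 4) + f (1 : Fin 4) + f (2 : Fin 4) + f (3 : Fin 4) :=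
    Fin.sum_univ_four
  have s3 : ∀ f : Fin (2 + 1) → M,
      ∑ i, f i = f (0 : Fin 3) + f (1 : Fin 3) + f (2 : Fin 3) :=
    Fin.sum_univ_three
  rw [ceD_three]
  simp only [AlternatingMap.add_apply, brPart, actPart, AlternatingMap.alternatizeUncurryFin_apply,
    s3, s4, LinearMap.comp_apply, LinearMap.coe_mk, AddHom.coe_mk,
    AlternatingMap.alternatizeUncurryFinLM_apply, LinearMap.compAlternatingMap_apply,
    LieModule.toEnd_apply_apply, AlternatingMap.curryLeft_apply_apply, LieAlgebra.ad_apply]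
  simp only [hF]
  change ((-1 : ℤ) ^ 0 • ((-1 : ℤ) ^ 0 • F ⁅v 0, v 1⁆ (v 2) (v 3) + (-1 : ℤ) ^ 1 • F ⁅v 0, v 2⁆ (v 1) (v 3) + (-1 : ℤ) ^ 2 • F ⁅v 0, v 3⁆ (v 1) (v 2))
        + (-1 : ℤ) ^ 1 • ((-1 : ℤ) ^ 0 • F ⁅v 1, v 0⁆ (v 2) (v 3) + (-1 : ℤ) ^ 1 • F ⁅v 1, v 2⁆ (v 0) (v 3) + (-1 : ℤ) ^ 2 • F ⁅v 1, v 3⁆ (v 0) (v 2))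
        + (-1 : ℤ) ^ 2 • ((-1 : ℤ) ^ 0 • F ⁅v 2, v 0⁆ (v 1) (v 3) + (-1 : ℤ) ^ 1 • F ⁅v 2, v 1⁆ (v 0) (v 3) + (-1 : ℤ) ^ 2 • F ⁅v 2, v 3⁆ (v 0) (v 1))
        + (-1 : ℤ) ^ 3 • ((-1 : ℤ) ^ 0 • F ⁅v 3, v 0⁆ (v 1) (v 2) + (-1 : ℤ) ^ 1 • F ⁅v 3, v 1⁆ (v 0) (v 2) + (-1 : ℤ) ^ 2 • F ⁅v 3, v 2⁆ (v 0) (v 1)))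
        + ((-1 : ℤ) ^ 0 • ⁅v 0, F (v 1) (v 2) (v 3)⁆
        + (-1 : ℤ) ^ 1 • ⁅v 1, F (v 0) (v 2) (v 3)⁆
        + (-1 : ℤ) ^ 2 • ⁅v 2, F (v 0) (v 1) (v 3)⁆
        + (-1 : ℤ) ^ 3 • ⁅v 3, F (v 0) (v 1) (v 2)⁆) =
        - F ⁅v 0, v 1⁆ (v 2) (v 3)
         + F ⁅v 0, v 2⁆ (v 1) (v 3)
         - F ⁅v 0, v 3⁆ (v 1) (v 2)
         - F ⁅v 1, v 2⁆ (v 0) (v 3)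
         + F ⁅v 1, v 3⁆ (v 0) (v 2)
         - F ⁅v 2, v 3⁆ (v 0) (v 1)
         + ⁅v 0, F (v 1) (v 2) (v 3)⁆
         - ⁅v 1, F (v 0) (v 2) (v 3)⁆
         + ⁅v 2, F (v 0) (v 1) (v 3)⁆
         - ⁅v 3, F (v 0) (v 1) (v 2)⁆
  rw [← sub_eq_zero]
  have hn : ∀ a b c d, F ⁅b, a⁆ c d = - F ⁅a, b⁆ c d := by
    intro a b c d
    have := neg_cons 2 φ a b ![c, d]
    rwa [hF, hF] at this
  have n1 : F ⁅v 1, v 0⁆ (v 2) (v 3) = - F ⁅v 0, v 1⁆ (v 2) (v 3) := hn _ _ (v 2) (v 3)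
  have n2 : F ⁅v 2, v 0⁆ (v 1) (v 3) = - F ⁅v 0, v 2⁆ (v 1) (v 3) := hn _ _ (v 1) (v 3)
  have n3 : F ⁅v 3, v 0⁆ (v 1) (v 2) = - F ⁅v 0, v 3⁆ (v 1) (v 2) := hn _ _ (v 1) (v 2)
  have n4 : F ⁅v 2, v 1⁆ (v 0) (v 3) = - F ⁅v 1, v 2⁆ (v 0) (v 3) := hn _ _ (v 0) (v 3)
  have n5 : F ⁅v 3, v 1⁆ (v 0) (v 2) = - F ⁅v 1, v 3⁆ (v 0) (v 2) := hn _ _ (v 0) (v 2)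
  have n6 : F ⁅v 3, v 2⁆ (v 0) (v 1) = - F ⁅v 2, v 3⁆ (v 0) (v 1) := hn _ _ (v 0) (v 1)
  have h1 := three_smul_zero (k := k) (F ⁅v 0, v 1⁆ (v 2) (v 3))
  have h2 := three_smul_zero (k := k) (F ⁅v 0, v 2⁆ (v 1) (v 3))
  have h3 := three_smul_zero (k := k) (F ⁅v 0, v 3⁆ (v 1) (v 2))
  have h4 := three_smul_zero (k := k) (F ⁅v 1, v 2⁆ (v 0) (v 3))
  have h5 := three_smul_zero (k := k) (F ⁅v 1, v 3⁆ (v 0) (v 2))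
  have h6 := three_smul_zero (k := k) (F ⁅v 2, v 3⁆ (v 0) (v 1))
  rw [n1, n2, n3, n4, n5, n6]
  simp only [pow_zero, one_smul, neg_smul, pow_succ, mul_neg, mul_one, neg_neg,
    neg_add, smul_neg]
  refine Eq.trans ?_ ((congrArg₂ (· + ·) (congrArg₂ (· + ·) (congrArg₂ (· - ·) h1 h2) h3)
    (congrArg₂ (· + ·) (congrArg₂ (· - ·) h4 h5) h6)).trans (by simp))
  abel

end alternating

/-! ### Coordinates of cochains and the dimension count -/

section count

set_option linter.unusedSectionVars false

open Module

variable {k : Type*} [Field k]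
variable {g : Type*} [LieRing g] [LieAlgebra k g]
variable {M : Type*} [AddCommGroup M] [Module k M] [LieRingModule g M] [LieModule k g M]

/-- Linear combination of basis vectors given by a form. -/
noncomputable def bsum (e : Basis (Fin 8) k g) : Form → g
  | [] => 0
  | p :: l => (p.2 : k) • e (f8 p.1) + bsum e l

lemma map_bsum (e : Basis (Fin 8) k g) (T : g →ₗ[k] k) (l : Form) :
    T (bsum e l) = ev l (fun n => T (e (f8 n))) := by
  induction l with
  | nil => simp [bsum]
  | cons p l ih => simp [bsum, ih]

lemma coord_bsum (e : Basis (Fin 8) k g) (m : Basis (Fin 7) k M) {n : ℕ}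
    (φ : g [⋀^Fin (n + 1)]→ₗ[k] M) (v : Fin n → g) (i : Fin 7) (l : Form) :
    m.repr (φ (Matrix.vecCons (bsum e l) v)) i =
      ev l (fun n => m.repr (φ (Matrix.vecCons (e (f8 n)) v)) i) := by
  let T : g →ₗ[k] k :=
    { toFun := fun x => m.repr (φ (Matrix.vecCons x v)) i
      map_add' := fun x y => by simp [AlternatingMap.map_vecCons_add]
      map_smul' := fun c x => by simp [AlternatingMap.map_vecCons_smul] }
  exact map_bsum e T l

lemma f8_val (a : Fin 8) : f8 a.val = a := by
  apply Fin.ext; simp [f8]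

lemma f7_val (a : Fin 7) : f7 a.val = a := by
  apply Fin.ext; simp [f7]

lemma val_f8 (n : ℕ) (h : n < 8) : (f8 n).val = n := by
  simpa [f8] using h

lemma val_f7 (n : ℕ) (h : n < 7) : (f7 n).val = n := by
  simpa [f7] using h

/-- Coordinates of a 2-cochain. -/
noncomputable def X2 (e : Basis (Fin 8) k g) (m : Basis (Fin 7) k M) (φ : g [⋀^Fin 2]→ₗ[k] M)
    (n : ℕ) : k :=
  m.repr (φ ![e (f8 (n / 100)), e (f8 (n / 10 % 10))]) (f7 (n % 10))

/-- Coordinates of a 3-cochain. -/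
noncomputable def X3 (e : Basis (Fin 8) k g) (m : Basis (Fin 7) k M) (φ : g [⋀^Fin 3]→ₗ[k] M)
    (n : ℕ) : k :=
  m.repr (φ ![e (f8 (n / 1000)), e (f8 (n / 100 % 10)), e (f8 (n / 10 % 10))]) (f7 (n % 10))

variable (e : Basis (Fin 8) k g) (m : Basis (Fin 7) k M)

lemma X2_key (φ : g [⋀^Fin 2]→ₗ[k] M) (a b : Fin 8) (i : Fin 7) :
    X2 e m φ (key2 a b i) = m.repr (φ ![e a, e b]) i := by
  have h1 : key2 a b i / 100 = a.val := by unfold key2; omega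
  have h2 : key2 a b i / 10 % 10 = b.val := by unfold key2; omega
  have h3 : key2 a b i % 10 = i.val := by unfold key2; omega
  rw [X2, h1, h2, h3, f8_val, f8_val, f7_val]

lemma X3_key (φ : g [⋀^Fin 3]→ₗ[k] M) (a b c : Fin 8) (i : Fin 7) :
    X3 e m φ (key3 a b c i) = m.repr (φ ![e a, e b, e c]) i := by
  have h1 : key3 a b c i / 1000 = a.val := by unfold key3; omega
  have h2 : key3 a b c i / 100 % 10 = b.val := by unfold key3; omega
  have h2' : key3 a b c i / 10 % 10 = c.val := by unfold key3; omega
  have h3 : key3 a b c i % 10 = i.val := by unfold key3; omega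
  rw [X3, h1, h2, h2', h3, f8_val, f8_val, f8_val, f7_val]

lemma good2_spec (n : ℕ) (h : good2 n = true) : ∃ a b : Fin 8, ∃ i : Fin 7,
    a < b ∧ key2 a b i = n := by
  simp only [good2, Bool.and_eq_true, Nat.blt_eq] at h
  obtain ⟨⟨h1, h2⟩, h3⟩ := h
  exact ⟨⟨n / 100, by omega⟩, ⟨n / 10 % 10, by omega⟩, ⟨n % 10, by omega⟩, h1, by
    simp only [key2]; omega⟩

lemma good3_spec (n : ℕ) (h : good3 n = true) : ∃ a b c : Fin 8, ∃ i : Fin 7,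
    a < b ∧ b < c ∧ key3 a b c i = n := by
  simp only [good3, Bool.and_eq_true, Nat.blt_eq] at h
  obtain ⟨⟨⟨h1, h2⟩, h3⟩, h4⟩ := h
  exact ⟨⟨n / 1000, by omega⟩, ⟨n / 100 % 10, by omega⟩, ⟨n / 10 % 10, by omega⟩,
    ⟨n % 10, by omega⟩, h1, h2, by simp only [key3]; omega⟩

lemma two_eq [CharP k 3] : ((2 : ℕ) : k) = -1 := by
  have h : ((3 : ℕ) : k) = 0 := CharP.cast_eq_zero k 3
  push_cast at h ⊢
  linear_combination h

variable [CharP k 3]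

lemma nrm2_spec (φ : g [⋀^Fin 2]→ₗ[k] M) (a b : Fin 8) (i : Fin 7) :
    ev (nrm2 a b i) (X2 e m φ) = m.repr (φ ![e a, e b]) i := by
  unfold nrm2
  split_ifs with h1 h2
  · simp [X2_key]
  · simp only [ev_cons, ev_nil, X2_key, two_eq]
    rw [swap2 φ (e a) (e b)]; simp
  · have : a = b := le_antisymm (not_lt.1 h2) (not_lt.1 h1)
    subst this
    rw [eq2]; simp

lemma nrm3_spec (φ : g [⋀^Fin 3]→ₗ[k] M) (a b c : Fin 8) (i : Fin 7) :
    ev (nrm3 a b c i) (X3 e m φ) = m.repr (φ ![e a, e b, e c]) i := by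
  have eqv : ∀ x y : Fin 8, ¬ x < y → ¬ y < x → x = y := fun x y h h' =>
    le_antisymm (not_lt.1 h') (not_lt.1 h)
  unfold nrm3
  split_ifs with h1 h2 h3 h4 h5 h6 h7 h8 h9 h10
  · simp [X3_key]
  · simp only [ev_cons, ev_nil, X3_key, two_eq]
    rw [swap3' φ (e a) (e b) (e c)]; simp
  · obtain rfl := eqv b c h2 h4
    rw [eq3']; simp
  · simp only [ev_cons, ev_nil, X3_key]
    rw [swap3 φ (e a) (e c) (e b), swap3' φ (e a) (e b) (e c)]; simp
  · obtain rfl := eqv a c h3 h5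
    rw [eq3'']; simp
  · simp only [ev_cons, ev_nil, X3_key, two_eq]
    rw [swap3 φ (e a) (e b) (e c)]; simp
  · simp only [ev_cons, ev_nil, X3_key]
    rw [swap3' φ (e b) (e a) (e c), swap3 φ (e a) (e b) (e c)]; simp
  · obtain rfl := eqv a c h7 h9
    rw [eq3'']; simp
  · simp only [ev_cons, ev_nil, X3_key, two_eq]
    rw [swap3 φ (e b) (e c) (e a), swap3' φ (e b) (e a) (e c), swap3 φ (e a) (e b) (e c)]; simp
  · obtain rfl := eqv b c h8 h10
    rw [eq3']; simp
  · obtain rfl := eqv a b h1 h6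
    rw [eq3]; simp

lemma row2_spec
    (hbr : ∀ a b, ⁅e a, e b⁆ = bsum e (br a b))
    (hact : ∀ a i (w : M), m.repr ⁅e a, w⁆ i = ev (act a i) (fun l => m.repr w (f7 l)))
    (φ : g [⋀^Fin 2]→ₗ[k] M) (a b c : Fin 8) (i : Fin 7) :
    m.repr (ceD k g M φ ![e a, e b, e c]) i = ev (row2 a b c i) (X2 e m φ) := by
  rw [ceD_two]
  simp only [row2, ev_append, ev_scale, ev_subst, nrm2_spec, two_eq, Matrix.cons_val_zero,
    Matrix.cons_val_one, Matrix.cons_val, hbr, map_add, map_sub, map_neg, Finsupp.coe_add,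
    Finsupp.coe_sub, Finsupp.coe_neg, Pi.add_apply, Pi.sub_apply, Pi.neg_apply, hact, coord_bsum]
  ring

lemma row3_spec
    (hbr : ∀ a b, ⁅e a, e b⁆ = bsum e (br a b))
    (hact : ∀ a i (w : M), m.repr ⁅e a, w⁆ i = ev (act a i) (fun l => m.repr w (f7 l)))
    (φ : g [⋀^Fin 3]→ₗ[k] M) (a b c d : Fin 8) (i : Fin 7) :
    m.repr (ceD k g M φ ![e a, e b, e c, e d]) i = ev (row3 a b c d i) (X3 e m φ) := by
  rw [ceD_three]
  simp only [row3, ev_append, ev_scale, ev_subst, nrm3_spec, two_eq, Matrix.cons_val_zero,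
    Matrix.cons_val_one, Matrix.cons_val, hbr, map_add, map_sub, map_neg, Finsupp.coe_add,
    Finsupp.coe_sub, Finsupp.coe_neg, Pi.add_apply, Pi.sub_apply, Pi.neg_apply, hact, coord_bsum]
  ring

lemma claimA
    (hbr : ∀ a b, ⁅e a, e b⁆ = bsum e (br a b))
    (hact : ∀ a i (w : M), m.repr ⁅e a, w⁆ i = ev (act a i) (fun l => m.repr w (f7 l)))
    (ψ : g [⋀^Fin 3]→ₗ[k] M) (hψ : ψ ∈ ceZ k g M 3)
    (hp : ∀ t : Fin 8, ev (prj t.val) (X3 e m ψ) = 0) : ψ ∈ ceB k g M 3 := by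
  obtain ⟨φ, hφ⟩ := alt_exists2 e
    (fun a b => ∑ i, ev (hom3 (key2 a b i)) (X3 e m ψ) • m i)
  obtain ⟨D, hD⟩ := exists_ceD_two φ
  have hX : ∀ n, good2 n = true → X2 e m φ n = ev (hom3 n) (X3 e m ψ) := by
    intro n hn
    obtain ⟨a, b, i, hab, rfl⟩ := good2_spec n hn
    rw [X2_key, hφ a b hab, Basis.repr_sum_self]
  have key : ψ = D := by
    apply alt_ext e
    intro s
    rw [comp_three, hD]
    have h01 : s 0 < s 1 := s.strictMono (by decide)
    have h12 : s 1 < s 2 := s.strictMono (by decide)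
    generalize s 0 = a at *
    generalize s 1 = b at *
    generalize s 2 = c at *
    apply m.repr.injective
    ext i
    rw [row2_spec e m hbr hact, ev_congr _ _ _ good2 (good2_row2 a b h01 c h12 i) hX]
    have hc := ev_isZero _ (X3 e m ψ) (homCheck_all a b h01 c h12 i)
    simp only [ev_cons, ev_append, ev_subst, X3_key, two_eq] at hc
    rw [ev_eq_zero (hom4 _), ev_eq_zero (rep _)] at hc
    · linear_combination -hc
    · intro n
      have := hp ⟨n % 8, Nat.mod_lt _ (by norm_num)⟩
      simpa [prj] using this
    · intro n
      rw [row3', ← row3_spec e m hbr hact, hψ]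
      simp
  rw [key]
  exact ⟨φ, hD⟩

lemma claimB
    (hbr : ∀ a b, ⁅e a, e b⁆ = bsum e (br a b))
    (hact : ∀ a i (w : M), m.repr ⁅e a, w⁆ i = ev (act a i) (fun l => m.repr w (f7 l)))
    (ψ : g [⋀^Fin 3]→ₗ[k] M) (hψ : ψ ∈ ceB k g M 3) (t : Fin 8) :
    ev (prj t.val) (X3 e m ψ) = 0 := by
  obtain ⟨φ, hφ⟩ := hψ
  rw [← ev_isZero _ (X2 e m φ) (prj_row2 t), ev_subst]
  congr 1
  funext n
  rw [row2', ← row2_spec e m hbr hact, X3, hφ]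

lemma claimC
    (hbr : ∀ a b, ⁅e a, e b⁆ = bsum e (br a b))
    (hact : ∀ a i (w : M), m.repr ⁅e a, w⁆ i = ev (act a i) (fun l => m.repr w (f7 l)))
    (y : Fin 8 → k) : ∃ ψ ∈ ceZ k g M 3, ∀ t : Fin 8,
    ev (prj t.val) (X3 e m ψ) = y t := by
  obtain ⟨ψ, hψ⟩ := alt_exists3 e
    (fun a b c => ∑ i, ev (rep (key3 a b c i)) (fun n => y (f8 n)) • m i)
  obtain ⟨D, hD⟩ := exists_ceD_three ψ
  have hX : ∀ n, good3 n = true → X3 e m ψ n = ev (rep n) (fun n => y (f8 n)) := by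
    intro n hn
    obtain ⟨a, b, c, i, hab, hbc, rfl⟩ := good3_spec n hn
    rw [X3_key, hψ a b c hab hbc, Basis.repr_sum_self]
  have hD0 : D = 0 := by
    apply alt_ext e
    intro s
    rw [comp_four, hD]
    have h01 : s 0 < s 1 := s.strictMono (by decide)
    have h12 : s 1 < s 2 := s.strictMono (by decide)
    have h23 : s 2 < s 3 := s.strictMono (by decide)
    generalize s 0 = a at *
    generalize s 1 = b at *
    generalize s 2 = c at *
    generalize s 3 = d at *
    apply m.repr.injective
    ext i
    rw [row3_spec e m hbr hact, ev_congr _ _ _ good3 (good3_row3 a b h01 c h12 d h23 i) hX,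
      ← ev_subst, ev_isZero _ _ (cocycle_rep a b h01 c h12 d h23 i)]
    simp
  refine ⟨ψ, fun v => by rw [← hD, hD0]; simp, fun t => ?_⟩
  rw [ev_congr _ _ _ good3 (good3_prj t) hX]
  have h := ev_isZero _ (fun n => y (f8 n)) (prj_rep t)
  simp only [ev_cons, ev_subst, two_eq, f8_val] at h
  linear_combination h

theorem finrank_H3
    (hbr : ∀ a b, ⁅e a, e b⁆ = bsum e (br a b))
    (hact : ∀ a i (w : M), m.repr ⁅e a, w⁆ i = ev (act a i) (fun l => m.repr w (f7 l))) : Module.finrank k (ceH k g M 3) = 8 := by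
  let P : ceZ k g M 3 →ₗ[k] (Fin 8 → k) :=
    { toFun := fun ψ t => ev (prj t.val) (X3 e m ψ.1)
      map_add' := fun ψ φ => by
        funext t
        rw [Pi.add_apply, ← ev_add]
        congr 1
        funext n
        simp [X3]
      map_smul' := fun c ψ => by
        funext t
        rw [Pi.smul_apply, RingHom.id_apply, smul_eq_mul, ← ev_smul]
        congr 1
        funext n
        simp [X3] }
  have hsurj : Function.Surjective P := by
    intro y
    obtain ⟨ψ, hψ, h⟩ := claimC e m hbr hact y
    exact ⟨⟨ψ, hψ⟩, funext h⟩
  have hker : (ceB k g M 3).comap (ceZ k g M 3).subtype = LinearMap.ker P := by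
    ext ψ
    rw [Submodule.mem_comap, LinearMap.mem_ker]
    constructor
    · intro h
      funext t
      exact claimB e m hbr hact ψ.1 h t
    · intro h
      exact claimA e m hbr hact ψ.1 ψ.2 (fun t => congrFun h t)
  rw [((Submodule.quotEquivOfEq _ _ hker).trans (P.quotKerEquivOfSurjective hsurj)).finrank_eq]
  simp

end count

/-! ### The quotient by the center -/

section quotient

set_option linter.unusedSectionVars false

open Module

/-- Indicator form of a coordinate. -/
def del8 (i : Fin 8) (n : ℕ) : Form := if f8 n = i then [(0, 1)] else []
/-- Indicator form of a coordinate of the quotient. -/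
def del7 (b : Fin 8) (n : ℕ) : Form := if (f7 n).castSucc = b then [(0, 1)] else []

lemma act_br : ∀ (a b : Fin 8) (i : Fin 7),
    isZero (subst (del8 i.castSucc) (br a b) ++ scale 2 (subst (del7 b) (act a i))) = true := by
  decide +kernel

lemma br_seven : ∀ a : Fin 8, br 7 a = [] := by decide +kernel

variable {k : Type*} [Field k] [CharP k 3]
variable {g : Type*} [LieRing g] [LieAlgebra k g]

lemma ev_linear (l : Form) (T : ℕ → (g →ₗ[k] k)) : ∃ S : g →ₗ[k] k,
    ∀ x, S x = ev l (fun n => T n x) := by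
  induction l with
  | nil => exact ⟨0, fun x => by simp⟩
  | cons p l ih =>
    obtain ⟨S, hS⟩ := ih
    exact ⟨(p.2 : k) • T p.1 + S, fun x => by simp [hS]⟩

lemma coord_lie (e : Basis (Fin 8) k g) (hbr : ∀ a b, ⁅e a, e b⁆ = bsum e (br a b))
    (a : Fin 8) (i : Fin 7) (x : g) :
    e.repr ⁅e a, x⁆ i.castSucc = ev (act a i) (fun l => e.repr x (f7 l).castSucc) := by
  obtain ⟨S, hS⟩ := ev_linear (act a i) (fun l => e.coord (f7 l).castSucc)
  have h : (e.coord i.castSucc) ∘ₗ (LieAlgebra.ad k g (e a)) = S := by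
    apply e.ext
    intro b
    rw [hS]
    simp only [LinearMap.comp_apply, LieAlgebra.ad_apply, hbr, map_bsum]
    have hc := ev_isZero _ (fun _ => (1 : k)) (act_br a b i)
    simp only [ev_append, ev_scale, ev_subst, two_eq] at hc
    have h1 : ∀ n, ev (del8 i.castSucc n) (fun _ => (1 : k)) =
        e.coord i.castSucc (e (f8 n)) := by
      intro n
      simp only [del8, Basis.coord_apply, Basis.repr_self, Finsupp.single_apply]
      split_ifs <;> simp
    have h2 : ∀ n, ev (del7 b n) (fun _ => (1 : k)) = e.coord (f7 n).castSucc (e b) := by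
      intro n
      simp only [del7, Basis.coord_apply, Basis.repr_self, Finsupp.single_apply, eq_comm]
      split_ifs <;> simp
    simp only [h1, h2] at hc
    linear_combination hc
  have := congrArg (fun f => f x) h
  simp only [hS] at this
  exact this

/-- The first seven coordinates. -/
noncomputable def proj7 (e : Basis (Fin 8) k g) : g →ₗ[k] (Fin 7 → k) :=
  LinearMap.pi fun i => e.coord i.castSucc

lemma proj7_surj (e : Basis (Fin 8) k g) : Function.Surjective (proj7 e) := by
  intro y
  refine ⟨∑ i : Fin 7, y i • e i.castSucc, ?_⟩
  funext i
  simp [proj7, Finsupp.single_apply]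

lemma center_eq (e : Basis (Fin 8) k g) (hbr : ∀ a b, ⁅e a, e b⁆ = bsum e (br a b)) :
    (LieAlgebra.center k g).toSubmodule = LinearMap.ker (proj7 e) := by
  ext x
  rw [LieSubmodule.mem_toSubmodule, LinearMap.mem_ker, LieModule.mem_maxTrivSubmodule]
  constructor
  · intro h
    have hc : ∀ (a : Fin 8) (i : Fin 7),
        ev (act a i) (fun l => e.repr x (f7 l).castSucc) = 0 := by
      intro a i
      rw [← coord_lie e hbr, h]
      simp
    funext i
    change e.repr x i.castSucc = 0
    have two_ne : ((2 : ℕ) : k) ≠ 0 := by rw [two_eq]; simp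
    have one_ne : ((1 : ℕ) : k) ≠ 0 := by simp
    have aux : ∀ (a : Fin 8) (j : Fin 7) (c : ℕ), act a j = [(i.val, c)] → (c : k) ≠ 0 →
        e.repr x i.castSucc = 0 := by
      intro a j c h1 h2
      have h3 := hc a j
      rw [h1] at h3
      simp only [ev_cons, ev_nil, add_zero, f7_val] at h3
      exact (mul_eq_zero.1 h3).resolve_left h2
    fin_cases i
    · exact aux 2 6 2 (by decide +kernel) two_ne
    · exact aux 2 3 1 (by decide +kernel) one_ne
    · exact aux 0 6 1 (by decide +kernel) one_ne
    · exact aux 0 1 1 (by decide +kernel) one_ne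
    · exact aux 0 5 2 (by decide +kernel) two_ne
    · exact aux 1 0 1 (by decide +kernel) one_ne
    · exact aux 0 0 1 (by decide +kernel) one_ne
  · intro h y
    have hx : x = e.repr x 7 • e 7 := by
      apply e.repr.injective
      ext j
      induction j using Fin.lastCases with
      | last => simp [show (7 : Fin 8) = Fin.last 7 from rfl]
      | cast i =>
        have h1 : e.repr x i.castSucc = 0 := congrFun h i
        rw [h1]
        have h2 : (7 : Fin 8) ≠ i.castSucc := by
          intro h; have := congrArg Fin.val h; simp at this; omega
        simp [h2]
    have h7 : LieAlgebra.ad k g (e 7) = 0 := by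
      apply e.ext
      intro a
      simp [hbr, br_seven, bsum]
    have h8 : ⁅y, e 7⁆ = 0 := by
      rw [← lie_skew, ← LieAlgebra.ad_apply k, h7]
      simp
    rw [hx, lie_smul, h8, smul_zero]

theorem finrank_H3_quot (e : Basis (Fin 8) k g)
    (hbr : ∀ a b, ⁅e a, e b⁆ = bsum e (br a b)) :
    Module.finrank k (ceH k g (g ⧸ LieAlgebra.center k g) 3) = 8 := by
  let L : (g ⧸ LieAlgebra.center k g) ≃ₗ[k] (Fin 7 → k) :=
    (Submodule.quotEquivOfEq _ _ (center_eq e hbr)).trans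
      ((proj7 e).quotKerEquivOfSurjective (proj7_surj e))
  have hL : ∀ x : g, L (LieSubmodule.Quotient.mk x) = proj7 e x := fun x => rfl
  refine finrank_H3 e (Basis.ofEquivFun L) hbr ?_
  intro a i w
  obtain ⟨x, rfl⟩ := LieSubmodule.Quotient.surjective_mk' _ w
  have h1 : ⁅e a, LieSubmodule.Quotient.mk' (LieAlgebra.center k g) x⁆ =
      LieSubmodule.Quotient.mk' (LieAlgebra.center k g) ⁅e a, x⁆ :=
    (LieModuleHom.map_lie _ _ _).symm
  rw [h1]
  simp only [Basis.ofEquivFun_repr_apply]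
  exact coord_lie e hbr a i x

end quotient

/-! ### The Lie algebra `sl₃` -/

section special

set_option linter.unusedSectionVars false

open Module

/-- The matrix with given coordinates. -/
def mat {R : Type*} [CommRing R] (x : Fin 8 → R) : Matrix (Fin 3) (Fin 3) R :=
  !![x 6 + x 7, x 0, x 1; x 2, -x 6 + x 7, x 3; x 4, x 5, x 7]

/-- The basis matrices modulo 3. -/
def matE (a : Fin 8) : Matrix (Fin 3) (Fin 3) (ZMod 3) := mat (Pi.single a 1)

/-- Linear combination of basis matrices modulo 3. -/
def matSum : Form → Matrix (Fin 3) (Fin 3) (ZMod 3)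
  | [] => 0
  | p :: l => (p.2 : ZMod 3) • matE (f8 p.1) + matSum l

lemma matE_comm : ∀ a b : Fin 8, matE a * matE b - matE b * matE a = matSum (br a b) := by
  decide +kernel

variable (k : Type*) [Field k] [CharP k 3]

lemma three_zero : (3 : k) = 0 := by
  have h : ((3 : ℕ) : k) = 0 := CharP.cast_eq_zero k 3
  exact_mod_cast h

/-- Coordinates on `sl₃`. -/
noncomputable def coords : sl3 k ≃ₗ[k] (Fin 8 → k) where
  toFun A := ![A.1 0 1, A.1 0 2, A.1 1 0, A.1 1 2, A.1 2 0, A.1 2 1, A.1 0 0 - A.1 2 2, A.1 2 2]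
  invFun x := ⟨mat x, by
    change Matrix.trace (mat x) = 0
    simp [mat, Matrix.trace_fin_three]
    linear_combination (x 7) * three_zero k⟩
  map_add' A B := by
    funext i; fin_cases i <;> simp; ring
  map_smul' c A := by
    funext i; fin_cases i <;> simp; ring
  left_inv A := by
    have hA : Matrix.trace A.1 = 0 := A.2
    rw [Matrix.trace_fin_three] at hA
    apply Subtype.ext
    ext i j
    fin_cases i <;> fin_cases j <;> simp [mat]
    linear_combination (-1 : k) * hA + (A.1 2 2) * three_zero k
  right_inv x := by
    funext i; fin_cases i <;> simp [mat]

/-- The basis of `sl₃`. -/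
noncomputable def eB : Basis (Fin 8) k (sl3 k) := Basis.ofEquivFun (coords k)

lemma mat_map (f : ZMod 3 →+* k) (a : Fin 8) :
    (matE a).map f = mat (Pi.single a 1 : Fin 8 → k) := by
  have h : ∀ j, f ((Pi.single a 1 : Fin 8 → ZMod 3) j) = (Pi.single a 1 : Fin 8 → k) j := by
    intro j
    rw [Pi.single_apply, Pi.single_apply]
    split_ifs <;> simp
  ext i j
  fin_cases i <;> fin_cases j <;> simp [matE, mat, h]

lemma eB_val (f : ZMod 3 →+* k) (a : Fin 8) : (eB k a).1 = (matE a).map f := by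
  rw [mat_map]
  rw [eB, Basis.coe_ofEquivFun]
  rfl

lemma bsum_val (f : ZMod 3 →+* k) (l : Form) : (bsum (eB k) l).1 = (matSum l).map f := by
  induction l with
  | nil => ext i j; simp [bsum, matSum]
  | cons p l ih =>
    have h : (bsum (eB k) (p :: l)).1 = (p.2 : k) • (eB k (f8 p.1)).1 + (bsum (eB k) l).1 := rfl
    rw [h, ih, eB_val k f]
    ext i j
    simp [matSum]

lemma eB_lie (a b : Fin 8) : ⁅eB k a, eB k b⁆ = bsum (eB k) (br a b) := by
  let f : ZMod 3 →+* k := ZMod.castHom (dvd_refl 3) k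
  apply Subtype.ext
  rw [bsum_val k f]
  have h : (⁅eB k a, eB k b⁆ : sl3 k).1 = (eB k a).1 * (eB k b).1 - (eB k b).1 * (eB k a).1 := rfl
  have h2 : matE a * matE b - matE b * matE a = matSum (br a b) := matE_comm a b
  rw [h, eB_val k f, eB_val k f, ← h2, Matrix.map_sub (f := f) (by simp), Matrix.map_mul, Matrix.map_mul]

end special

end SL3H3

theorem H3_quotient_module_dim (k : Type*) [Field k] [IsAlgClosed k] [CharP k 3] :
    Module.finrank k (ceH k (sl3 k) (sl3ModCenter k) 3) = 8 := by
  exact SL3H3.finrank_H3_quot (SL3H3.eB k) (SL3H3.eB_lie k)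
end

section
/- Let k be an algebraically closed field of characteristic 3, let g = sl_3(k) be the Lie algebra of traceless 3×3 matrices over k, let Z(g) be its center, and let L = g/Z(g) be the 7-dimensional quotient g-module with the action induced by the adjoint action. Then dim_k H^5(g, L) = 8. -/
namespace CE3

open Module

section differential

variable {k : Type*} [Field k]
variable {g : Type*} [LieRing g] [LieAlgebra k g]
variable {M : Type*} [AddCommGroup M] [Module k M] [LieRingModule g M] [LieModule k g M]

/-- The bracket part of the differential before alternatization. -/
def brk {n : ℕ} (ψ : g [⋀^Fin (n + 1)]→ₗ[k] M) : g →ₗ[k] g →ₗ[k] (g [⋀^Fin n]→ₗ[k] M) :=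
  LinearMap.mk₂ k (fun x y => ψ.curryLeft ⁅x, y⁆)
    (by intros; simp [add_lie]) (by intros; simp) (by intros; simp) (by intros; simp)

/-- The action part of the differential before alternatization. -/
def act {n : ℕ} (ψ : g [⋀^Fin n]→ₗ[k] M) : g →ₗ[k] (g [⋀^Fin n]→ₗ[k] M) where
  toFun x := (LieModule.toEnd k g M x).compAlternatingMap ψ
  map_add' x y := by ext v; simp
  map_smul' c x := by ext v; simp

/-- The differential as an alternating map (characteristic three). -/
def dfun {n : ℕ} (ψ : g [⋀^Fin (n + 1)]→ₗ[k] M) : g [⋀^Fin (n + 2)]→ₗ[k] M :=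
  AlternatingMap.alternatizeUncurryFin (AlternatingMap.alternatizeUncurryFinLM ∘ₗ brk ψ) +
    AlternatingMap.alternatizeUncurryFin (act ψ)

lemma sum_lt_eq {n : ℕ} {N : Type*} [AddCommMonoid N]
    (F : (i j : Fin (n + 2)) → i < j → N) :
    (∑ i : Fin (n + 2), ∑ j : Fin (n + 2), if h : i < j then F i j h else 0) =
      ∑ i : Fin (n + 1), ∑ j : Fin (n + 1),
        if h : i ≤ j then F i.castSucc j.succ (by simpa [Fin.castSucc_lt_succ_iff] using h)
          else 0 := by
  rw [Fin.sum_univ_castSucc]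
  have hlast : (∑ j : Fin (n + 2), if h : Fin.last (n+1) < j then F _ j h else 0) = 0 := by
    apply Finset.sum_eq_zero
    intro j _
    rw [dif_neg]
    exact not_lt.mpr (Fin.le_last j)
  rw [hlast, add_zero]
  refine Finset.sum_congr rfl fun i _ => ?_
  rw [Fin.sum_univ_succ, dif_neg (by simp), zero_add]
  refine Finset.sum_congr rfl fun j _ => ?_
  by_cases h : i ≤ j
  · rw [dif_pos h, dif_pos]
  · rw [dif_neg h, dif_neg]
    simpa [Fin.castSucc_lt_succ_iff] using h

lemma dfun_apply [CharP k 3] {n : ℕ} (ψ : g [⋀^Fin (n + 1)]→ₗ[k] M) (v : Fin (n + 2) → g) :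
    dfun ψ v = ceD k g M ψ v := by
  have h3 : (3 : k) = 0 := CharP.cast_eq_zero k 3
  have two : ∀ m : M, m + m = - m := by
    intro m
    have : (3 : k) • m = 0 := by rw [h3, zero_smul]
    have h : (3 : k) • m = m + m + m := by
      rw [show (3 : k) = 1 + 1 + 1 by norm_num]; simp [add_smul]
    rw [h] at this
    exact eq_neg_of_add_eq_zero_left this
  simp only [dfun, ceD, AlternatingMap.add_apply]
  congr 1
  · rw [AlternatingMap.alternatizeUncurryFin_alternatizeUncurryFinLM_comp_apply, sum_lt_eq]
    refine Finset.sum_congr rfl fun i _ => ?_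
    rw [← Finset.sum_filter_add_sum_filter_not Finset.univ (fun j => i ≤ j)]
    have : (Finset.univ.filter fun j : Fin (n+1) => i ≤ j) = Finset.Ici i := by ext; simp
    rw [this, Finset.sum_eq_zero (s := Finset.univ.filter fun j => ¬ i ≤ j), add_zero]
    · refine Finset.sum_congr rfl fun j hj => ?_
      rw [Finset.mem_Ici] at hj
      rw [dif_pos hj]
      simp only [brk, LinearMap.mk₂_apply, AlternatingMap.curryLeft_apply_apply]
      rw [← lie_skew (v j.succ)]
      have hneg : ∀ (x : g) (w : Fin n → g), ψ (Matrix.vecCons (-x) w) = - ψ (Matrix.vecCons x w) := by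
        intro x w
        have := (ψ.curryLeft).map_neg x
        have := congrArg (fun f => f w) this
        exact this
      rw [hneg, sub_neg_eq_add, two]
      simp only [Fin.val_castSucc, Fin.val_succ, Fin.pred_succ]
      rw [show (i : ℕ) + (j + 1) = i + j + 1 by ring, pow_succ, smul_neg, mul_neg, mul_one, neg_smul]
      rfl
    · intro j hj
      rw [dif_neg (by simpa using hj)]
  · rw [AlternatingMap.alternatizeUncurryFin_apply]
    rfl

/-- The differential as a linear map. -/
def dlin [CharP k 3] (n : ℕ) :
    (g [⋀^Fin (n + 1)]→ₗ[k] M) →ₗ[k] (g [⋀^Fin (n + 2)]→ₗ[k] M) where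
  toFun := dfun
  map_add' ψ φ := by ext v; simp [dfun_apply, ceD_add]
  map_smul' c ψ := by ext v; simp [dfun_apply, ceD_smul]

lemma ceZ_eq [CharP k 3] (n : ℕ) : ceZ k g M (n + 1) = LinearMap.ker (dlin (k := k) (g := g) (M := M) n) := by
  ext ψ
  rw [LinearMap.mem_ker, AlternatingMap.ext_iff]
  refine forall_congr' fun v => ?_
  change _ ↔ dfun ψ v = _
  rw [dfun_apply]; rfl

lemma ceB_eq [CharP k 3] (n : ℕ) : ceB k g M (n + 2) = LinearMap.range (dlin (k := k) (g := g) (M := M) n) := by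
  ext ψ
  rw [LinearMap.mem_range]
  refine exists_congr fun φ => ?_
  rw [AlternatingMap.ext_iff]
  refine forall_congr' fun v => ?_
  change _ ↔ dfun φ v = _
  rw [dfun_apply, eq_comm]

end differential

section coordinates

variable {k : Type*} [Field k]
variable {g : Type*} [AddCommGroup g] [Module k g]
variable {M : Type*} [AddCommGroup M] [Module k M]
variable {ι : Type*} [LinearOrder ι]

/-- The value of an alternating map on the increasing tuple of basis vectors given by a finset. -/
def cf (b : ι → g) {n : ℕ} (ψ : g [⋀^Fin n]→ₗ[k] M) (s : Finset ι) : M :=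
  if h : s.card = n then ψ (fun i => b (s.orderEmbOfFin h i)) else 0

lemma cf_of_card (b : ι → g) {n : ℕ} (ψ : g [⋀^Fin n]→ₗ[k] M) (s : Finset ι) (h : s.card = n) :
    cf b ψ s = ψ (fun i => b (s.orderEmbOfFin h i)) := dif_pos h

lemma cf_add (b : ι → g) {n : ℕ} (ψ φ : g [⋀^Fin n]→ₗ[k] M) (s : Finset ι) :
    cf b (ψ + φ) s = cf b ψ s + cf b φ s := by
  unfold cf; split_ifs <;> simp

lemma cf_smul (b : ι → g) {n : ℕ} (c : k) (ψ : g [⋀^Fin n]→ₗ[k] M) (s : Finset ι) :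
    cf b (c • ψ) s = c • cf b ψ s := by
  unfold cf; split_ifs <;> simp

/-- `cf` as a linear map in the alternating map. -/
def cfL (b : ι → g) (n : ℕ) (s : Finset ι) : (g [⋀^Fin n]→ₗ[k] M) →ₗ[k] M where
  toFun ψ := cf b ψ s
  map_add' ψ φ := cf_add b ψ φ s
  map_smul' c ψ := cf_smul b c ψ s

lemma emb_pos (s : Finset ι) {n : ℕ} (h : s.card = n) (i : Fin n) :
    (s.filter (· < s.orderEmbOfFin h i)).card = i := by
  have : s.filter (· < s.orderEmbOfFin h i) =
      (Finset.Iio i).map (s.orderEmbOfFin h).toEmbedding := by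
    ext x
    simp only [Finset.mem_filter, Finset.mem_map, Finset.mem_Iio, RelEmbedding.coe_toEmbedding]
    constructor
    · rintro ⟨hx, hlt⟩
      have : x ∈ Set.range (s.orderEmbOfFin h) := by
        rw [Finset.range_orderEmbOfFin]; exact hx
      obtain ⟨j, rfl⟩ := this
      exact ⟨j, by simpa using hlt, rfl⟩
    · rintro ⟨j, hj, rfl⟩
      exact ⟨Finset.orderEmbOfFin_mem s h j, by simpa using hj⟩
  rw [this, Finset.card_map, Fin.card_Iio]

lemma emb_erase (s : Finset ι) {n : ℕ} (h : s.card = n + 1) (i : Fin (n + 1))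
    (h' : (s.erase (s.orderEmbOfFin h i)).card = n) (l : Fin n) :
    s.orderEmbOfFin h (i.succAbove l) = (s.erase (s.orderEmbOfFin h i)).orderEmbOfFin h' l := by
  have := Finset.orderEmbOfFin_unique h' (f := fun l => s.orderEmbOfFin h (i.succAbove l))
    (fun x => by
      rw [Finset.mem_erase]
      refine ⟨?_, Finset.orderEmbOfFin_mem s h _⟩
      intro hx
      exact Fin.succAbove_ne i x ((s.orderEmbOfFin h).injective hx))
    ((s.orderEmbOfFin h).strictMono.comp (Fin.strictMono_succAbove i))
  exact congrFun this l

lemma cf_alt (b : ι → g) {n : ℕ} (f : g →ₗ[k] g [⋀^Fin n]→ₗ[k] M) (s : Finset ι)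
    (h : s.card = n + 1) :
    cf b (AlternatingMap.alternatizeUncurryFin f) s =
      ∑ x ∈ s, (-1 : ℤ) ^ (s.filter (· < x)).card • cf b (f (b x)) (s.erase x) := by
  rw [cf_of_card b _ s h, AlternatingMap.alternatizeUncurryFin_apply]
  have hs : s = Finset.univ.map (s.orderEmbOfFin h).toEmbedding := by
    ext x; simp
  conv_rhs => rw [Finset.sum_congr hs (fun _ _ => rfl)]
  rw [Finset.sum_map]
  refine Finset.sum_congr rfl fun i _ => ?_
  have h' : (s.erase (s.orderEmbOfFin h i)).card = n := by
    rw [Finset.card_erase_of_mem (Finset.orderEmbOfFin_mem s h i), h]; rfl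
  simp only [RelEmbedding.coe_toEmbedding]
  rw [emb_pos, cf_of_card b _ _ h']
  congr 2
  funext l
  simp only [Fin.removeNth]
  rw [emb_erase s h i h']

lemma cf_curry (b : ι → g) {n : ℕ} (ψ : g [⋀^Fin (n + 1)]→ₗ[k] M) (r : Finset ι)
    (h : r.card = n) (c : ι) :
    cf b (ψ.curryLeft (b c)) r =
      if c ∈ r then 0 else (-1 : ℤ) ^ (r.filter (· < c)).card • cf b ψ (insert c r) := by
  rw [cf_of_card b _ r h, AlternatingMap.curryLeft_apply_apply]
  split_ifs with hc
  · have : c ∈ Set.range (r.orderEmbOfFin h) := by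
      rw [Finset.range_orderEmbOfFin]; exact hc
    obtain ⟨j, hj⟩ := this
    refine ψ.map_eq_zero_of_eq _ (i := 0) (j := j.succ) ?_ (Fin.succ_ne_zero j).symm
    simp [hj]
  · have hs : (insert c r).card = n + 1 := by rw [Finset.card_insert_of_notMem hc, h]
    rw [cf_of_card b _ _ hs]
    have : c ∈ Set.range ((insert c r).orderEmbOfFin hs) := by
      rw [Finset.range_orderEmbOfFin]; simp
    obtain ⟨i, hi⟩ := this
    have her : (insert c r).erase ((insert c r).orderEmbOfFin hs i) = r := by
      rw [hi, Finset.erase_insert hc]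
    have hfil : (r.filter (· < c)) = (insert c r).filter (· < c) := by
      ext x; simp only [Finset.mem_filter, Finset.mem_insert]
      constructor
      · rintro ⟨a, b⟩; exact ⟨Or.inr a, b⟩
      · rintro ⟨a | a, b⟩
        · exact absurd b (by simp [a])
        · exact ⟨a, b⟩
    have hp := emb_pos (insert c r) hs i
    rw [hi] at hp
    rw [hfil, hp, ← AlternatingMap.neg_one_pow_smul_map_insertNth ψ i]
    congr 2
    funext l
    refine Fin.succAboveCases i ?_ (fun l => ?_) l
    · simp [hi]
    · have h' : ((insert c r).erase ((insert c r).orderEmbOfFin hs i)).card = n := by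
        rw [her, h]
      simp only [Fin.insertNth_apply_succAbove]
      rw [emb_erase _ hs i h']
      congr 2
      simp only [her]

/-- Coordinates on the space of alternating maps. -/
noncomputable def cfEquiv (b : Basis ι k g) (n : ℕ) :
    (g [⋀^Fin n]→ₗ[k] M) ≃ₗ[k] (Set.powersetCard ι n → M) :=
  exteriorPower.alternatingMapLinearEquiv ≪≫ₗ ((b.exteriorPower n).constr k).symm

lemma cfEquiv_apply (b : Basis ι k g) (n : ℕ) (ψ : g [⋀^Fin n]→ₗ[k] M)
    (s : Set.powersetCard ι n) : cfEquiv b n ψ s = cf b ψ s.1 := by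
  have hs : s.1.card = n := s.2
  rw [cf_of_card b ψ s.1 hs]
  simp only [cfEquiv, LinearEquiv.trans_apply, Basis.constr_symm_apply,
    exteriorPower.basis_apply, exteriorPower.ιMulti_family,
    exteriorPower.alternatingMapLinearEquiv_apply_ιMulti]
  rfl

end coordinates

section sl3

/-- Structure constants of `sl₃` in characteristic three: an entry `(x, y, c, v)` says that
`(-1)^v e_c` occurs in `[e_x, e_y]`. -/
def SCn : List (ℕ × ℕ × ℕ × ℕ) :=
  [(0, 2, 6, 0), (0, 3, 1, 0), (0, 4, 5, 1), (0, 6, 0, 0), (1, 2, 3, 1), (1, 4, 6, 1),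
   (1, 4, 7, 1), (1, 5, 0, 0), (1, 6, 1, 1), (2, 5, 4, 1), (2, 6, 2, 1), (3, 4, 2, 0),
   (3, 5, 6, 0), (3, 5, 7, 1), (3, 6, 3, 0), (4, 6, 4, 0), (5, 6, 5, 1),
   (2, 0, 6, 1), (3, 0, 1, 1), (4, 0, 5, 0), (6, 0, 0, 1), (2, 1, 3, 0), (4, 1, 6, 0),
   (4, 1, 7, 0), (5, 1, 0, 1), (6, 1, 1, 0), (5, 2, 4, 0), (6, 2, 2, 0), (4, 3, 2, 1),
   (5, 3, 6, 1), (5, 3, 7, 0), (6, 3, 3, 1), (6, 4, 4, 1), (6, 5, 5, 0)]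

/-- Structure constants with indices in `Fin 8`. -/
def SC : List (Fin 8 × Fin 8 × Fin 8 × ℕ) :=
  SCn.map fun e => (Fin.ofNat 8 e.1, Fin.ofNat 8 e.2.1, Fin.ofNat 8 e.2.2.1, e.2.2.2)

/-- The basis matrices over the prime field. -/
def B0 : Fin 8 → Matrix (Fin 3) (Fin 3) (ZMod 3) :=
  ![!![0, 1, 0; 0, 0, 0; 0, 0, 0], !![0, 0, 1; 0, 0, 0; 0, 0, 0],
    !![0, 0, 0; 1, 0, 0; 0, 0, 0], !![0, 0, 0; 0, 0, 1; 0, 0, 0],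
    !![0, 0, 0; 0, 0, 0; 1, 0, 0], !![0, 0, 0; 0, 0, 0; 0, 1, 0],
    !![1, 0, 0; 0, -1, 0; 0, 0, 0], !![1, 0, 0; 0, 1, 0; 0, 0, 1]]

lemma B0_comm : ∀ x y : Fin 8, B0 x * B0 y - B0 y * B0 x =
    (SC.map fun e => if e.1 = x ∧ e.2.1 = y then (-1 : ZMod 3) ^ e.2.2.2 • B0 e.2.2.1 else 0).sum := by
  decide +kernel

variable (k : Type*) [Field k] [CharP k 3]

/-- Coordinates on `sl₃(k)`. -/
def slEquiv : sl3 k ≃ₗ[k] (Fin 8 → k) where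
  toFun A := ![A.1 0 1, A.1 0 2, A.1 1 0, A.1 1 2, A.1 2 0, A.1 2 1, A.1 0 0 - A.1 2 2, A.1 2 2]
  map_add' A B := by
    ext i; fin_cases i <;> simp [sub_add_sub_comm]
  map_smul' c A := by
    ext i; fin_cases i <;> simp [mul_sub]
  invFun v := ⟨!![v 6 + v 7, v 0, v 1; v 2, v 7 - v 6, v 3; v 4, v 5, v 7], by
    have h3 : (3 : k) = 0 := CharP.cast_eq_zero k 3
    change Matrix.trace (!![v 6 + v 7, v 0, v 1; v 2, v 7 - v 6, v 3; v 4, v 5, v 7] : Matrix (Fin 3) (Fin 3) k) = 0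
    rw [Matrix.trace_fin_three]
    simp
    linear_combination v 7 * h3⟩
  left_inv A := by
    have h3 : (3 : k) = 0 := CharP.cast_eq_zero k 3
    have h : Matrix.trace A.1 = 0 := A.2
    rw [Matrix.trace_fin_three] at h
    apply Subtype.ext
    ext i j
    fin_cases i <;> fin_cases j <;> simp
    linear_combination A.1 2 2 * h3 - h
  right_inv v := by
    ext i; fin_cases i <;> simp

/-- The basis of `sl₃(k)`. -/
noncomputable def bs : Basis (Fin 8) k (sl3 k) := Basis.ofEquivFun (slEquiv k)

lemma bs_val (x : Fin 8) : (bs k x).1 = (B0 x).map (ZMod.castHom (dvd_refl 3) k) := by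
  have : (bs k x) = (slEquiv k).symm (Pi.single x 1) := by simp [bs]
  rw [this]
  ext i j
  change (!![_, _, _; _, _, _; _, _, _] : Matrix (Fin 3) (Fin 3) k) i j = _
  fin_cases x <;> fin_cases i <;> fin_cases j <;> simp [B0]

lemma bs_lie (x y : Fin 8) : ⁅bs k x, bs k y⁆ =
    (SC.map fun e => if e.1 = x ∧ e.2.1 = y then (-1 : k) ^ e.2.2.2 • bs k e.2.2.1 else 0).sum := by
  apply Subtype.ext
  rw [LieAlgebra.SpecialLinear.sl_bracket, bs_val, bs_val, ← Matrix.map_mul, ← Matrix.map_mul,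
    ← Matrix.map_sub _ (by simp), B0_comm]
  have key : ∀ L : List (Fin 8 × Fin 8 × Fin 8 × ℕ),
      ((L.map fun e => if e.1 = x ∧ e.2.1 = y then (-1 : ZMod 3) ^ e.2.2.2 • B0 e.2.2.1
        else 0).sum).map (ZMod.castHom (dvd_refl 3) k) =
      ((L.map fun e => if e.1 = x ∧ e.2.1 = y then (-1 : k) ^ e.2.2.2 • bs k e.2.2.1
        else 0).sum).1 := by
    intro L
    induction L with
    | nil => ext; simp
    | cons e L ih =>
      simp only [List.map_cons, List.sum_cons]
      rw [Matrix.map_add _ (by simp), ih]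
      change _ = Subtype.val _ + Subtype.val _
      congr 1
      split_ifs
      · change _ = _ • Subtype.val _
        rw [bs_val]
        ext i j
        simp
      · ext; simp
  exact key SC

lemma mem_center_iff (A : sl3 k) :
    A ∈ LieAlgebra.center k (sl3 k) ↔ ∀ y : Fin 8, y ≠ 7 → (bs k).coord y A = 0 := by
  have hc : ∀ y, (bs k).coord y A = slEquiv k A y := by intro y; simp [bs]
  simp only [hc]
  constructor
  · intro h
    have h' : ∀ x : Fin 8, (bs k x).1 * A.1 - A.1 * (bs k x).1 = 0 := by
      intro x
      have := (LieModule.mem_maxTrivSubmodule k (sl3 k) (sl3 k) A).1 h (bs k x)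
      have := congrArg Subtype.val this
      rwa [LieAlgebra.SpecialLinear.sl_bracket] at this
    have e : ∀ (x : Fin 8) (i j : Fin 3), ((bs k x).1 * A.1 - A.1 * (bs k x).1) i j = 0 := by
      intro x i j; rw [h' x]; simp
    simp only [bs_val] at e
    have e1 := e 1
    have e4 := e 4
    have d := e1 0 0
    have f := e1 0 1
    have g1 := e1 1 2
    have g2 := e4 2 2
    have g3 := e4 2 1
    have g4 := e4 1 0
    have g5 := e1 0 2
    simp [B0, Matrix.mul_apply, Fin.sum_univ_three] at d f g1 g2 g3 g4 g5
    intro y hy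
    fin_cases y <;> simp [slEquiv] <;> simp_all
    linear_combination -g5
  · intro h
    rw [LieAlgebra.center, LieModule.mem_maxTrivSubmodule]
    intro x
    have : A = (slEquiv k A 7) • bs k 7 := by
      conv_lhs => rw [← (bs k).sum_repr A]
      rw [Finset.sum_eq_single 7]
      · congr 1
      · intro y _ hy
        have : (bs k).repr A y = 0 := (hc y).trans (h y hy)
        rw [this, zero_smul]
      · simp
    rw [this, lie_smul]
    have hz : ⁅x, bs k 7⁆ = 0 := by
      apply Subtype.ext
      rw [LieAlgebra.SpecialLinear.sl_bracket, bs_val]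
      have : (B0 7).map (ZMod.castHom (dvd_refl 3) k) = 1 := by
        ext i j; fin_cases i <;> fin_cases j <;> simp [B0]
      rw [this]; simp
    rw [hz, smul_zero]

/-- Coordinate functionals on the quotient module (the last one is zero). -/
noncomputable def lc (y : Fin 8) : sl3ModCenter k →ₗ[k] k :=
  Submodule.liftQ (LieAlgebra.center k (sl3 k)).toSubmodule (if y = 7 then 0 else (bs k).coord y) (by
    intro A hA
    rw [LinearMap.mem_ker]
    split_ifs with h
    · rfl
    · exact (mem_center_iff k A).1 hA y h)

/-- The quotient map. -/
def qm (A : sl3 k) : sl3ModCenter k := LieSubmodule.Quotient.mk A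

lemma lc_qm (y : Fin 8) (A : sl3 k) : lc k y (qm k A) = if y = 7 then 0 else (bs k).coord y A := by
  have : lc k y (qm k A) = (if y = 7 then 0 else (bs k).coord y : sl3 k →ₗ[k] k) A := rfl
  rw [this]
  split_ifs <;> rfl

lemma qm_surj (w : sl3ModCenter k) : ∃ A, qm k A = w :=
  Submodule.Quotient.mk_surjective _ w

lemma lc_ext (w : sl3ModCenter k) (h : ∀ y, y ≠ 7 → lc k y w = 0) : w = 0 := by
  obtain ⟨A, rfl⟩ := qm_surj k w
  have : A ∈ LieAlgebra.center k (sl3 k) := by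
    rw [mem_center_iff]
    intro y hy
    have := h y hy
    rwa [lc_qm, if_neg hy] at this
  exact (LieSubmodule.Quotient.mk_eq_zero _).2 this

/-- Coordinates of the action on the quotient module. -/
lemma lc_act (m : Fin 8) (hm : m ≠ 7) (x : Fin 8) (w : sl3ModCenter k) :
    lc k m ⁅bs k x, w⁆ = ∑ y : Fin 8, (SC.map fun e => if e.1 = x ∧ e.2.1 = y then
      (if e.2.2.1 = m then (-1 : k) ^ e.2.2.2 * lc k y w else 0) else 0).sum := by
  obtain ⟨A, rfl⟩ := qm_surj k w
  have h1 : ⁅bs k x, qm k A⁆ = qm k ⁅bs k x, A⁆ := rfl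
  rw [h1, lc_qm, if_neg hm]
  conv_lhs => rw [← (bs k).sum_repr A]
  rw [lie_sum, map_sum]
  refine Finset.sum_congr rfl fun y _ => ?_
  rw [lie_smul, bs_lie, map_smul, smul_eq_mul]
  have key : ∀ L : List (Fin 8 × Fin 8 × Fin 8 × ℕ), (∀ e ∈ L, e.2.1 ≠ 7) →
      (bs k).repr A y * (bs k).coord m ((L.map fun e => if e.1 = x ∧ e.2.1 = y then
        (-1 : k) ^ e.2.2.2 • bs k e.2.2.1 else 0).sum) =
      (L.map fun e => if e.1 = x ∧ e.2.1 = y then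
      (if e.2.2.1 = m then (-1 : k) ^ e.2.2.2 * lc k y (qm k A) else 0) else 0).sum := by
    intro L hL
    induction L with
    | nil => simp
    | cons e L ih =>
      simp only [List.map_cons, List.sum_cons]
      rw [map_add, mul_add, ih (fun e he => hL e (List.mem_cons_of_mem _ he))]
      congr 1
      by_cases h : e.1 = x ∧ e.2.1 = y
      · rw [if_pos h, if_pos h]
        have hy : y ≠ 7 := h.2 ▸ hL e (List.mem_cons_self)
        rw [lc_qm, if_neg hy]
        simp [Finsupp.single_apply]
        rw [mul_comm]
      · rw [if_neg h, if_neg h]; simp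
  exact key SC (by decide)

end sl3

section computation

/-- Evaluate a natural number before passing it on. -/
def force {α : Type} (n : ℕ) (f : ℕ → α) : α :=
  Nat.rec (f 0) (fun m _ => f (Nat.succ m)) n

lemma force_eq {α : Type} (n : ℕ) (f : ℕ → α) : force n f = f n := by
  cases n <;> rfl

/-- Bit test. -/
def bit (a x : ℕ) : Bool := Nat.beq (Nat.land (Nat.shiftRight a x) 1) 1

/-- Table of the parities of the bit counts of the numbers below 256. -/
def parT : ℕ := 47758914269546354982683078068829456704164423862093743397580034411621752859030

/-- Parity of the number of set bits of `a` below position `x`. -/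
def par (a x : ℕ) : ℕ := Nat.land (Nat.shiftRight parT (Nat.mod a (Nat.pow 2 x))) 1

/-- Table of the numbers below 256 with `n` set bits, for `n = 4` and `n = 5`. -/
def vt : ℕ → ℕ
  | 4 => 1774342044350424423459706185431556916232666498796281775013496886931783680
  | _ => 491338128622295080467692194227914152817285605757702676906227817904976429056

/-- Numbers below 256 with five bits. -/
def masks5 : List ℕ :=
  [31, 47, 55, 59, 61, 62, 79, 87, 91, 93, 94, 103, 107, 109, 110, 115, 117, 118, 121, 122, 124,
   143, 151, 155, 157, 158, 167, 171, 173, 174, 179, 181, 182, 185, 186, 188, 199, 203, 205, 206,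
   211, 213, 214, 217, 218, 220, 227, 229, 230, 233, 234, 236, 241, 242, 244, 248]

/-- Numbers below 256 with six bits. -/
def masks6 : List ℕ :=
  [63, 95, 111, 119, 123, 125, 126, 159, 175, 183, 187, 189, 190, 207, 215, 219, 221, 222, 231,
   235, 237, 238, 243, 245, 246, 249, 250, 252]

/-- First kind of terms of the differential. -/
def t1 (a m : ℕ) (e : ℕ × ℕ × ℕ × ℕ) (tl : List (ℕ × ℕ)) : List (ℕ × ℕ) :=
  match e with
  | (x, y, c, v) =>
    cond (bit a x)
      (force (Nat.xor a (Nat.pow 2 x)) fun a1 =>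
        cond (bit a1 y)
          (force (Nat.xor a1 (Nat.pow 2 y)) fun a2 =>
            cond (bit a2 c) tl
              (force (Nat.land (Nat.add (Nat.add (par a x) (par a1 y)) (Nat.add (par a2 c) v)) 1)
                fun ε => force (Nat.add (Nat.mul 8 (Nat.lor a2 (Nat.pow 2 c))) m)
                  fun q => (ε, q) :: tl))
          tl)
      tl

/-- Second kind of terms of the differential. -/
def t2 (a m : ℕ) (e : ℕ × ℕ × ℕ × ℕ) (tl : List (ℕ × ℕ)) : List (ℕ × ℕ) :=
  match e with
  | (x, y, c, v) =>
    cond (Nat.beq c m)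
      (cond (bit a x)
        (force (Nat.land (Nat.add (par a x) v) 1)
          fun ε => force (Nat.add (Nat.mul 8 (Nat.xor a (Nat.pow 2 x))) y)
            fun q => (ε, q) :: tl)
        tl)
      tl

/-- All terms of a row of the differential. -/
def terms (a m : ℕ) : List (ℕ × ℕ) :=
  SCn.foldr (t1 a m) (SCn.foldr (t2 a m) [])

/-- Addition of vectors over the field with three elements, in bit-sliced form. -/
def addK {α : Type} (z1 s1 z2 s2 : ℕ) (f : ℕ → ℕ → α) : α :=
  force (Nat.xor s1 s2) fun x =>
    force (Nat.xor (Nat.lor z1 z2) (Nat.land (Nat.land z1 z2) x)) fun z =>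
      force (Nat.xor s2 (Nat.land z1 (Nat.xor x z2))) fun s => f z s

/-- Sum up a list of terms. -/
def sumT {α : Type} (l : List (ℕ × ℕ)) : ℕ → ℕ → (ℕ → ℕ → α) → α :=
  List.rec (fun z s f => f z s)
    (fun e _ ih z s f =>
      addK (Nat.shiftLeft 1 e.2) (Nat.shiftLeft e.1 e.2) z s fun z' s' => ih z' s' f) l

/-- The rows of the differential for a list of bit masks. -/
def rows (l : List ℕ) : List (ℕ × ℕ) :=
  l.foldr (fun a tl => [0, 1, 2, 3, 4, 5, 6].foldr (fun m tl =>
    sumT (terms a m) 0 0 fun z s => (z, s) :: tl) tl) []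

/-- Check that a position is a valid code in degree `n`. -/
def valid (n q : ℕ) : Bool :=
  and (bit (vt n) (Nat.shiftRight q 3)) (Nat.ble (Nat.succ (Nat.land q 7)) 7)

/-- Position of the leading bit (used only as a hint). -/
def lg {α : Type} (z0 : ℕ) (f : ℕ → α) : α :=
  List.rec (fun _ q => f q) (fun b _ ih z q =>
    force (Nat.shiftRight z b) fun z' =>
      cond (Nat.beq z' 0) (ih z q) (force (Nat.add q b) fun q' => ih z' q'))
    [1024, 512, 256, 128, 64, 32, 16, 8, 4, 2, 1] z0 0

/-- Eliminate position `q` from the given rows using a pivot row. -/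
def redL (q z1 s1 n1 : ℕ) (b1 : Bool) (l : List (ℕ × ℕ)) : List (ℕ × ℕ) :=
  List.rec [] (fun w _ ih =>
    match w with
    | (z, s) => cond (bit z q)
        (cond (bit s q)
          (cond b1
            (addK z1 n1 z s fun z' s' => (z', s') :: ih)
            (addK z1 s1 z s fun z' s' => (z', s') :: ih))
          (cond b1
            (addK z1 s1 z s fun z' s' => (z', s') :: ih)
            (addK z1 n1 z s fun z' s' => (z', s') :: ih)))
        ((z, s) :: ih)) l

/-- Check that the rank of a list of rows is `r`. -/
def rkc (n : ℕ) (fuel : ℕ) : List (ℕ × ℕ) → ℕ → Bool :=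
  Nat.rec (fun _ _ => false) (fun _ ih l r =>
    match l with
    | [] => Nat.beq r 0
    | (z, s) :: ws =>
      cond (Nat.beq z 0) (ih ws r)
        (lg z fun q =>
          cond (and (valid n q) (and (bit z q) (Nat.ble 1 r)))
            (force (Nat.xor s z) fun n1 =>
             force (Nat.pred r) fun r' => ih (redL q z s n1 (bit s q) ws) r')
            false)) fuel

/-- Check that the composite of two differentials kills a coordinate. -/
def peel (n : ℕ) (fuel : ℕ) : ℕ → ℕ → ℕ → ℕ → Bool :=
  Nat.rec (fun _ _ _ _ => false) (fun _ ih z s az as =>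
    cond (Nat.beq z 0) (Nat.beq az 0)
      (lg z fun q =>
        cond (and (valid n q) (bit z q))
          (sumT (terms (Nat.shiftRight q 3) (Nat.land q 7)) 0 0 fun rz rs =>
            addK rz (cond (bit s q) (Nat.xor rs rz) rs) az as fun az' as' =>
              force (Nat.xor z (Nat.pow 2 q)) fun z' => ih z' s az' as')
          false)) fuel

lemma rk5 : rkc 5 500 (rows masks6) 154 = true := by decide +kernel
lemma rk4 : rkc 4 500 (rows masks5) 230 = true := by decide +kernel
lemma dsq : (rows masks6).all (fun w => peel 5 100 w.1 w.2 0 0) = true := by decide +kernel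

end computation

section formula

lemma sum_list_sum {ι N E : Type*} [AddCommMonoid N] (s : Finset ι) (L : List E)
    (G : ι → E → N) :
    ∑ x ∈ s, (L.map (G x)).sum = (L.map fun e => ∑ x ∈ s, G x e).sum := by
  induction L with
  | nil => simp
  | cons a L ih => simp [Finset.sum_add_distrib, ih]

variable (k : Type*) [Field k] [CharP k 3]

/-- Coordinates of a cochain. -/
noncomputable def X {n : ℕ} (ψ : (sl3 k) [⋀^Fin n]→ₗ[k] (sl3ModCenter k)) (s : Finset (Fin 8))
    (m : Fin 8) : k := lc k m (cf (bs k) ψ s)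

lemma X_dfun {n : ℕ} (ψ : (sl3 k) [⋀^Fin (n + 1)]→ₗ[k] (sl3ModCenter k)) (s : Finset (Fin 8))
    (hs : s.card = n + 2) (m : Fin 8) (hm : m ≠ 7) :
    X k (dfun ψ) s m =
      (SC.map fun e => if e.1 ∈ s then (if e.2.1 ∈ s.erase e.1 then
        (if e.2.2.1 ∈ (s.erase e.1).erase e.2.1 then 0 else
          (-1 : k) ^ (s.filter (· < e.1)).card * ((-1 : k) ^ ((s.erase e.1).filter (· < e.2.1)).card *
            ((-1 : k) ^ (((s.erase e.1).erase e.2.1).filter (· < e.2.2.1)).card *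
              ((-1 : k) ^ e.2.2.2 *
                X k ψ (insert e.2.2.1 ((s.erase e.1).erase e.2.1)) m)))) else 0) else 0).sum +
      (SC.map fun e => if e.2.2.1 = m then (if e.1 ∈ s then
        (-1 : k) ^ (s.filter (· < e.1)).card * ((-1 : k) ^ e.2.2.2 *
          X k ψ (s.erase e.1) e.2.1) else 0) else 0).sum := by
  have zz : ∀ (j : ℕ) (w : sl3ModCenter k), lc k m ((-1 : ℤ) ^ j • w) = (-1 : k) ^ j * lc k m w := by
    intro j w
    rw [map_zsmul]
    rw [zsmul_eq_mul]; push_cast; rfl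
  unfold X dfun
  rw [cf_add, map_add]
  congr 1
  · rw [cf_alt _ _ _ hs, map_sum]
    have h1 : ∀ x ∈ s, lc k m ((-1 : ℤ) ^ (s.filter (· < x)).card •
        cf (bs k) ((AlternatingMap.alternatizeUncurryFinLM ∘ₗ brk ψ) (bs k x)) (s.erase x)) =
        ∑ y ∈ s.erase x, (SC.map fun e => if e.1 = x ∧ e.2.1 = y then
          (if e.2.2.1 ∈ (s.erase x).erase y then 0 else
          (-1 : k) ^ (s.filter (· < x)).card * ((-1 : k) ^ ((s.erase x).filter (· < y)).card *
            ((-1 : k) ^ (((s.erase x).erase y).filter (· < e.2.2.1)).card *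
              ((-1 : k) ^ e.2.2.2 *
                lc k m (cf (bs k) ψ (insert e.2.2.1 ((s.erase x).erase y))))))) else 0).sum := by
      intro x hx
      have hx' : (s.erase x).card = n + 1 := by rw [Finset.card_erase_of_mem hx, hs]; rfl
      rw [zz]
      have : (AlternatingMap.alternatizeUncurryFinLM ∘ₗ brk ψ) (bs k x) =
        AlternatingMap.alternatizeUncurryFin (brk ψ (bs k x)) := rfl
      rw [this, cf_alt _ _ _ hx', map_sum, Finset.mul_sum]
      refine Finset.sum_congr rfl fun y hy => ?_
      have hy' : ((s.erase x).erase y).card = n := by rw [Finset.card_erase_of_mem hy, hx']; rfl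
      rw [zz]
      have hb : brk ψ (bs k x) (bs k y) = ψ.curryLeft ⁅bs k x, bs k y⁆ := rfl
      rw [hb, bs_lie]
      have hcf : ∀ w, lc k m (cf (bs k) (ψ.curryLeft w) ((s.erase x).erase y)) =
        (lc k m ∘ₗ cfL (bs k) n ((s.erase x).erase y) ∘ₗ ψ.curryLeft) w := fun w => rfl
      rw [hcf, map_list_sum, List.map_map, ← List.sum_map_mul_left, ← List.sum_map_mul_left]
      congr 1
      refine List.map_congr_left fun e _ => ?_
      simp only [Function.comp]
      by_cases he : e.1 = x ∧ e.2.1 = y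
      · rw [if_pos he, if_pos he, map_smul, ← hcf, cf_curry _ _ _ hy']
        split_ifs
        · simp
        · rw [zz]; simp only [smul_eq_mul]; ring
      · rw [if_neg he, if_neg he]; simp
    rw [Finset.sum_congr rfl h1]
    simp_rw [sum_list_sum]
    congr 1
    refine List.map_congr_left fun e _ => ?_
    obtain ⟨x, y, c, v⟩ := e
    simp only [ite_and]
    split_ifs with hx hy hc
    · rw [Finset.sum_eq_single x, Finset.sum_eq_single y]
      · simp [hc]
      · intro b _ hb; simp [Ne.symm hb]
      · intro h; exact absurd hy h
      · intro b _ hb; simp [Ne.symm hb]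
      · intro h; exact absurd hx h
    · rw [Finset.sum_eq_single x, Finset.sum_eq_single y]
      · simp only [if_true]; rw [if_neg hc]
      · intro b _ hb; simp [Ne.symm hb]
      · intro h; exact absurd hy h
      · intro b _ hb; simp [Ne.symm hb]
      · intro h; exact absurd hx h
    · refine Finset.sum_eq_zero fun b hb => Finset.sum_eq_zero fun d hd => ?_
      by_cases h1 : x = b
      · subst h1
        have : y ≠ d := by rintro rfl; exact hy hd
        simp [this]
      · simp [h1]
    · refine Finset.sum_eq_zero fun b hb => Finset.sum_eq_zero fun d hd => ?_
      have : x ≠ b := by rintro rfl; exact hx hb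
      simp [this]
  · rw [cf_alt _ _ _ hs, map_sum]
    have h1 : ∀ x ∈ s, lc k m ((-1 : ℤ) ^ (s.filter (· < x)).card •
        cf (bs k) (act ψ (bs k x)) (s.erase x)) =
        (SC.map fun e => if e.1 = x then (if e.2.2.1 = m then
          (-1 : k) ^ (s.filter (· < x)).card * ((-1 : k) ^ e.2.2.2 *
                lc k e.2.1 (cf (bs k) ψ (s.erase x))) else 0) else 0).sum := by
      intro x hx
      have hx' : (s.erase x).card = n + 1 := by rw [Finset.card_erase_of_mem hx, hs]; rfl
      have : cf (bs k) (act ψ (bs k x)) (s.erase x) = ⁅bs k x, cf (bs k) ψ (s.erase x)⁆ := by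
        rw [cf_of_card _ _ _ hx', cf_of_card _ _ _ hx']; rfl
      rw [zz, this, lc_act k m hm, sum_list_sum, ← List.sum_map_mul_left]
      congr 1
      refine List.map_congr_left fun e _ => ?_
      rw [Finset.sum_eq_single e.2.1]
      · by_cases h1 : e.1 = x <;> by_cases h2 : e.2.2.1 = m <;> simp [h1, h2]
      · intro b _ hb; simp [Ne.symm hb]
      · simp
    rw [Finset.sum_congr rfl h1, sum_list_sum]
    congr 1
    refine List.map_congr_left fun e _ => ?_
    obtain ⟨x, y, c, v⟩ := e
    simp only
    split_ifs with hc hx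
    · rw [Finset.sum_eq_single x]
      · simp
      · intro b _ hb; simp [Ne.symm hb]
      · intro h; exact absurd hx h
    · refine Finset.sum_eq_zero fun b hb => ?_
      have : x ≠ b := by rintro rfl; exact hx hb
      simp [this]
    · simp

end formula

section bridge

lemma bit_eq (a x : ℕ) : bit a x = a.testBit x := by
  have h : Nat.land (Nat.shiftRight a x) 1 = (a >>> x) % 2 := Nat.and_one_is_mod (a >>> x)
  unfold bit
  rw [h, Nat.testBit_eq_decide_div_mod_eq, Nat.shiftRight_eq_div_pow]
  rw [Bool.eq_iff_iff, Nat.beq_eq, decide_eq_true_iff]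

/-- The finite set with a given bit mask. -/
def fs (a : ℕ) : Finset (Fin 8) := Finset.univ.filter fun i => a.testBit i = true

lemma mem_fs (a : ℕ) (i : Fin 8) : i ∈ fs a ↔ a.testBit i = true := by simp [fs]

lemma fs_erase (a : ℕ) (x : Fin 8) (h : a.testBit x = true) :
    fs (Nat.xor a (Nat.pow 2 x)) = (fs a).erase x := by
  ext i
  rw [Finset.mem_erase, mem_fs, mem_fs]
  change (a ^^^ 2 ^ (x : ℕ)).testBit i = true ↔ _
  rw [Nat.testBit_xor, Nat.testBit_two_pow]
  by_cases hi : i = x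
  · subst hi; simp [h]
  · have : (x : ℕ) ≠ i := fun h => hi (Fin.ext h.symm)
    simp [hi, this]

lemma fs_insert (a : ℕ) (x : Fin 8) :
    fs (Nat.lor a (Nat.pow 2 x)) = insert x (fs a) := by
  ext i
  rw [Finset.mem_insert, mem_fs, mem_fs]
  change (a ||| 2 ^ (x : ℕ)).testBit i = true ↔ _
  rw [Nat.testBit_or, Nat.testBit_two_pow]
  by_cases hi : i = x
  · subst hi; simp
  · have : (x : ℕ) ≠ i := fun h => hi (Fin.ext h.symm)
    simp [hi, this]

lemma fs_filter (a : ℕ) (x : Fin 8) :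
    (fs a).filter (· < x) = fs (Nat.mod a (Nat.pow 2 x)) := by
  ext i
  rw [Finset.mem_filter, mem_fs, mem_fs]
  change _ ↔ (a % 2 ^ (x : ℕ)).testBit i = true
  rw [Nat.testBit_mod_two_pow]
  simp [and_comm]

lemma card_par : ∀ a : Fin 256, (fs a).card % 2 = Nat.land (Nat.shiftRight parT a) 1 := by
  decide +kernel

lemma neg_one_pow_mod {k : Type*} [Field k] (n : ℕ) : (-1 : k) ^ (n % 2) = (-1) ^ n := by
  conv_rhs => rw [← Nat.div_add_mod n 2, pow_add, pow_mul]
  simp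

lemma par_eq {k : Type*} [Field k] (a : ℕ) (ha : a < 256) (x : Fin 8) :
    (-1 : k) ^ ((fs a).filter (· < x)).card = (-1) ^ (par a x) := by
  rw [fs_filter, ← neg_one_pow_mod]
  have h : Nat.mod a (Nat.pow 2 x) < 256 := lt_of_le_of_lt (Nat.mod_le _ _) ha
  rw [card_par ⟨_, h⟩]
  rfl

lemma card_vt4 : ∀ a : Fin 256, (fs a).card = 4 ↔ bit (vt 4) a = true := by
  decide +kernel

lemma card_vt5 : ∀ a : Fin 256, (fs a).card = 5 ↔ bit (vt 5) a = true := by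
  decide +kernel

lemma card_masks5 : ∀ a : Fin 256, (fs a).card = 5 ↔ (a : ℕ) ∈ masks5 := by
  decide +kernel

lemma card_masks6 : ∀ a : Fin 256, (fs a).card = 6 ↔ (a : ℕ) ∈ masks6 := by
  decide +kernel

lemma masks5_lt : ∀ a ∈ masks5, a < 256 := by decide

lemma masks6_lt : ∀ a ∈ masks6, a < 256 := by decide

lemma fs_inj {a b : ℕ} (ha : a < 256) (hb : b < 256) (h : fs a = fs b) : a = b := by
  apply Nat.eq_of_testBit_eq
  intro i
  by_cases hi : i < 8
  · have := Finset.ext_iff.1 h ⟨i, hi⟩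
    rw [mem_fs, mem_fs] at this
    exact Bool.eq_iff_iff.2 this
  · have h8 : 256 ≤ 2 ^ i := by
      calc 256 = 2 ^ 8 := by norm_num
        _ ≤ 2 ^ i := Nat.pow_le_pow_right (by norm_num) (by omega)
    rw [Nat.testBit_lt_two_pow (by omega), Nat.testBit_lt_two_pow (by omega)]

lemma fs_surj (s : Finset (Fin 8)) : ∃ a, a < 256 ∧ fs a = s := by
  have hinj : Function.Injective (fun a : Fin 256 => fs a) := fun a b h =>
    Fin.ext (fs_inj a.2 b.2 h)
  have hb := (Fintype.bijective_iff_injective_and_card _).2 ⟨hinj, by simp⟩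
  obtain ⟨a, ha⟩ := hb.2 s
  exact ⟨a, a.2, ha⟩

variable (k : Type*) [Field k] [CharP k 3]

/-- Coordinates of a cochain in terms of codes. -/
noncomputable def Xq {n : ℕ} (ψ : (sl3 k) [⋀^Fin n]→ₗ[k] (sl3ModCenter k)) (q : ℕ) : k :=
  X k ψ (fs (q / 8)) (Fin.ofNat 8 q)

lemma Xq_code {n : ℕ} (ψ : (sl3 k) [⋀^Fin n]→ₗ[k] (sl3ModCenter k)) (a : ℕ) (m : Fin 8) :
    Xq k ψ (Nat.add (Nat.mul 8 a) m) = X k ψ (fs a) m := by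
  unfold Xq
  have h1 : (Nat.add (Nat.mul 8 a) m) / 8 = a := by
    change (8 * a + m) / 8 = a
    omega
  have h2 : Fin.ofNat 8 (Nat.add (Nat.mul 8 a) m) = m := by
    apply Fin.ext
    change (8 * a + m) % 8 = m
    omega
  rw [h1, h2]

lemma xor_lt (a : ℕ) (ha : a < 256) (x : Fin 8) : Nat.xor a (Nat.pow 2 x) < 256 :=
  Nat.xor_lt_two_pow (n := 8) ha (Nat.pow_lt_pow_right (by norm_num) x.2)

lemma lor_lt (a : ℕ) (ha : a < 256) (x : Fin 8) : Nat.lor a (Nat.pow 2 x) < 256 :=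
  Nat.or_lt_two_pow (n := 8) ha (Nat.pow_lt_pow_right (by norm_num) x.2)

lemma terms_lt (a : ℕ) (ha : a < 256) (m : Fin 8) : ∀ t ∈ terms a m, t.2 < 2048 := by
  have hS : ∀ e ∈ SCn, e.1 < 8 ∧ e.2.1 < 8 ∧ e.2.2.1 < 8 := by decide
  have code : ∀ b < 256, ∀ y < 8, Nat.add (Nat.mul 8 b) y < 2048 := by
    intro b hb y hy
    change 8 * b + y < 2048
    omega
  have h2 : ∀ L : List (ℕ × ℕ × ℕ × ℕ), (∀ e ∈ L, e.1 < 8 ∧ e.2.1 < 8 ∧ e.2.2.1 < 8) →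
      ∀ t ∈ L.foldr (t2 a m) [], t.2 < 2048 := by
    intro L hL
    induction L with
    | nil => simp
    | cons e L ih =>
      have ih' := ih fun e' he' => hL e' (List.mem_cons_of_mem _ he')
      obtain ⟨hx, hy, hc⟩ := hL e List.mem_cons_self
      obtain ⟨x, y, c, v⟩ := e
      simp only [List.foldr_cons, t2, force_eq]
      cases Nat.beq c m
      · exact ih'
      · cases bit a x
        · exact ih'
        · intro t ht
          rcases List.mem_cons.1 ht with rfl | ht
          · exact code _ (xor_lt a ha ⟨x, hx⟩) _ hy
          · exact ih' t ht
  have h1 : ∀ L : List (ℕ × ℕ × ℕ × ℕ), (∀ e ∈ L, e.1 < 8 ∧ e.2.1 < 8 ∧ e.2.2.1 < 8) →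
      ∀ t ∈ L.foldr (t1 a m) (SCn.foldr (t2 a m) []), t.2 < 2048 := by
    intro L hL
    induction L with
    | nil => exact h2 SCn hS
    | cons e L ih =>
      have ih' := ih fun e' he' => hL e' (List.mem_cons_of_mem _ he')
      obtain ⟨hx, hy, hc⟩ := hL e List.mem_cons_self
      obtain ⟨x, y, c, v⟩ := e
      simp only [List.foldr_cons, t1, force_eq]
      cases bit a x
      · exact ih'
      · simp only [cond_true]
        cases bit (Nat.xor a (Nat.pow 2 x)) y
        · exact ih'
        · simp only [cond_true]
          cases bit (Nat.xor (Nat.xor a (Nat.pow 2 x)) (Nat.pow 2 y)) c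
          · intro t ht
            rcases List.mem_cons.1 ht with rfl | ht
            · exact code _ (lor_lt _ (xor_lt _ (xor_lt a ha ⟨x, hx⟩) ⟨y, hy⟩) ⟨c, hc⟩) _ m.2
            · exact ih' t ht
          · exact ih'
  exact h1 SCn hS

lemma X_terms {n : ℕ} (ψ : (sl3 k) [⋀^Fin (n + 1)]→ₗ[k] (sl3ModCenter k)) (a : ℕ) (ha : a < 256)
    (hs : (fs a).card = n + 2) (m : Fin 8) (hm : m ≠ 7) :
    X k (dfun ψ) (fs a) m = ((terms a m).map fun t => (-1 : k) ^ t.1 * Xq k ψ t.2).sum := by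
  have hS : ∀ e ∈ SCn, e.1 < 8 ∧ e.2.1 < 8 ∧ e.2.2.1 < 8 := by decide
  rw [X_dfun k ψ (fs a) hs m hm]
  have sgn : ∀ j : ℕ, (-1 : k) ^ (Nat.land j 1) = (-1) ^ j := by
    intro j
    have : Nat.land j 1 = j % 2 := Nat.and_one_is_mod j
    rw [this, neg_one_pow_mod]
  have ofN : ∀ x (hx : x < 8), Fin.ofNat 8 x = (⟨x, hx⟩ : Fin 8) := by
    intro x hx; apply Fin.ext; exact Nat.mod_eq_of_lt hx
  unfold SC
  simp only [List.map_map]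
  have h2 : ∀ L : List (ℕ × ℕ × ℕ × ℕ), (∀ e ∈ L, e.1 < 8 ∧ e.2.1 < 8 ∧ e.2.2.1 < 8) →
      ((L.foldr (t2 a m) []).map fun t => (-1 : k) ^ t.1 * Xq k ψ t.2).sum =
      (L.map ((fun e : Fin 8 × Fin 8 × Fin 8 × ℕ => if e.2.2.1 = m then (if e.1 ∈ fs a then
        (-1 : k) ^ ((fs a).filter (· < e.1)).card * ((-1 : k) ^ e.2.2.2 *
          X k ψ ((fs a).erase e.1) e.2.1) else 0) else 0) ∘ fun e =>
            (Fin.ofNat 8 e.1, Fin.ofNat 8 e.2.1, Fin.ofNat 8 e.2.2.1, e.2.2.2))).sum := by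
    intro L hL
    induction L with
    | nil => simp
    | cons e L ih =>
      have ih' := ih fun e' he' => hL e' (List.mem_cons_of_mem _ he')
      obtain ⟨hx, hy, hc⟩ := hL e List.mem_cons_self
      obtain ⟨x, y, c, v⟩ := e
      simp only [List.foldr_cons, List.map_cons, List.sum_cons, ← ih']
      simp only [t2, force_eq, Function.comp, ofN x hx, ofN y hy, ofN c hc, mem_fs]
      by_cases h : c = m
      · have hb : Nat.beq c m = true := by rw [Nat.beq_eq]; exact h
        have hf : (⟨c, hc⟩ : Fin 8) = m := Fin.ext h
        rw [hb, if_pos hf, bit_eq]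
        by_cases hax : a.testBit x = true
        · rw [hax, if_pos rfl]
          simp only [cond_true, List.map_cons, List.sum_cons]
          congr 1
          rw [sgn, Xq_code k ψ _ ⟨y, hy⟩, fs_erase a ⟨x, hx⟩ hax, par_eq a ha ⟨x, hx⟩]
          change (-1 : k) ^ (par a x + v) * _ = _
          rw [pow_add, mul_assoc]
        · rw [if_neg hax]
          rw [Bool.not_eq_true] at hax
          rw [hax]; simp
      · have hb : Nat.beq c m = false := by
          rw [← Bool.not_eq_true]; exact fun h' => h (Nat.eq_of_beq_eq_true h')
        have hf : (⟨c, hc⟩ : Fin 8) ≠ m := fun h' => h (congrArg Fin.val h')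
        rw [hb, if_neg hf]; simp
  have h1 : ∀ L : List (ℕ × ℕ × ℕ × ℕ), (∀ e ∈ L, e.1 < 8 ∧ e.2.1 < 8 ∧ e.2.2.1 < 8) →
      ∀ tl, ((L.foldr (t1 a m) tl).map fun t => (-1 : k) ^ t.1 * Xq k ψ t.2).sum =
      (L.map ((fun e : Fin 8 × Fin 8 × Fin 8 × ℕ => if e.1 ∈ fs a then
        (if e.2.1 ∈ (fs a).erase e.1 then
        (if e.2.2.1 ∈ ((fs a).erase e.1).erase e.2.1 then 0 else
          (-1 : k) ^ ((fs a).filter (· < e.1)).card *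
          ((-1 : k) ^ (((fs a).erase e.1).filter (· < e.2.1)).card *
            ((-1 : k) ^ ((((fs a).erase e.1).erase e.2.1).filter (· < e.2.2.1)).card *
              ((-1 : k) ^ e.2.2.2 *
                X k ψ (insert e.2.2.1 (((fs a).erase e.1).erase e.2.1)) m)))) else 0) else 0) ∘
          fun e => (Fin.ofNat 8 e.1, Fin.ofNat 8 e.2.1, Fin.ofNat 8 e.2.2.1, e.2.2.2))).sum +
        (tl.map fun t => (-1 : k) ^ t.1 * Xq k ψ t.2).sum := by
    intro L hL tl
    induction L with
    | nil => simp
    | cons e L ih =>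
      have ih' := ih fun e' he' => hL e' (List.mem_cons_of_mem _ he')
      obtain ⟨hx, hy, hc⟩ := hL e List.mem_cons_self
      obtain ⟨x, y, c, v⟩ := e
      simp only [List.foldr_cons, List.map_cons, List.sum_cons]
      rw [add_assoc, ← ih']
      simp only [t1, force_eq, Function.comp, ofN x hx, ofN y hy, ofN c hc]
      by_cases hax : a.testBit x = true
      · rw [bit_eq a x, hax, if_pos ((mem_fs a ⟨x, hx⟩).2 hax), ← fs_erase a ⟨x, hx⟩ hax]
        have ha1 := xor_lt a ha ⟨x, hx⟩
        rw [cond_true]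
        simp only at ha1 ⊢
        generalize Nat.xor a (Nat.pow 2 x) = a1 at ha1 ⊢
        by_cases hay : a1.testBit y = true
        · rw [bit_eq a1 y, hay, if_pos ((mem_fs a1 ⟨y, hy⟩).2 hay), ← fs_erase a1 ⟨y, hy⟩ hay]
          have ha2 := xor_lt a1 ha1 ⟨y, hy⟩
          rw [cond_true]
          simp only at ha2 ⊢
          generalize Nat.xor a1 (Nat.pow 2 y) = a2 at ha2 ⊢
          by_cases hac : a2.testBit c = true
          · rw [bit_eq a2 c, hac, if_pos ((mem_fs a2 ⟨c, hc⟩).2 hac)]; simp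
          · rw [if_neg (fun h => hac ((mem_fs a2 ⟨c, hc⟩).1 h))]
            rw [Bool.not_eq_true] at hac
            rw [bit_eq a2 c, hac]
            simp only [cond_false, List.map_cons, List.sum_cons]
            congr 1
            rw [sgn, Xq_code k ψ _ m, fs_insert a2 ⟨c, hc⟩, par_eq a ha ⟨x, hx⟩,
              par_eq a1 ha1 ⟨y, hy⟩, par_eq a2 ha2 ⟨c, hc⟩]
            change (-1 : k) ^ ((par a x + par a1 y) + (par a2 c + v)) * _ = _
            rw [pow_add, pow_add, pow_add]
            simp only [mul_assoc]
        · rw [if_neg (fun h => hay ((mem_fs a1 ⟨y, hy⟩).1 h))]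
          rw [Bool.not_eq_true] at hay
          rw [bit_eq a1 y, hay]; simp
      · rw [if_neg (fun h => hax ((mem_fs a ⟨x, hx⟩).1 h))]
        rw [Bool.not_eq_true] at hax
        rw [bit_eq a x, hax]; simp
  unfold terms
  rw [h1 SCn hS, h2 SCn hS]

end bridge

section correctness

variable (k : Type*) [Field k] [CharP k 3]

/-- The digit at position `q` of a bit-sliced vector. -/
def dg (z s q : ℕ) : k := if z.testBit q then (if s.testBit q then -1 else 1) else 0

lemma dg_zero (s q : ℕ) : dg k 0 s q = 0 := by simp [dg]

lemma one_add_one_three : (1 : k) + 1 = -1 := by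
  have h3 : (3 : k) = 0 := CharP.cast_eq_zero k 3
  linear_combination h3

lemma addK_spec (z1 s1 z2 s2 : ℕ) : ∃ Z S : ℕ,
    (∀ (α : Type) (f : ℕ → ℕ → α), addK z1 s1 z2 s2 f = f Z S) ∧
    ∀ q, dg k Z S q = dg k z1 s1 q + dg k z2 s2 q := by
  refine ⟨(z1 ||| z2) ^^^ ((z1 &&& z2) &&& (s1 ^^^ s2)), s2 ^^^ (z1 &&& ((s1 ^^^ s2) ^^^ z2)), ?_, ?_⟩
  · intro α f
    simp only [addK, force_eq]
    rfl
  · intro q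
    have h := one_add_one_three k
    have h' : (-1 : k) + -1 = 1 := by linear_combination -h
    unfold dg
    simp only [Nat.testBit_xor, Nat.testBit_or, Nat.testBit_and]
    cases z1.testBit q <;> cases z2.testBit q <;> cases s1.testBit q <;> cases s2.testBit q <;>
      simp [h, h']

lemma dg_neg (z s q : ℕ) : dg k z (Nat.xor s z) q = - dg k z s q := by
  have : (Nat.xor s z).testBit q = ((s.testBit q) ^^ (z.testBit q)) := Nat.testBit_xor s z q
  unfold dg
  rw [this]
  cases z.testBit q <;> cases s.testBit q <;> simp

lemma dg_single (q0 ε q : ℕ) :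
    dg k (Nat.shiftLeft 1 q0) (Nat.shiftLeft ε q0) q = if q = q0 then (-1 : k) ^ ε else 0 := by
  have h1 : (Nat.shiftLeft 1 q0).testBit q = decide (q = q0) := by
    change (1 <<< q0).testBit q = _
    rw [Nat.one_shiftLeft, Nat.testBit_two_pow]
    simp [eq_comm]
  have h2 : (Nat.shiftLeft ε q0).testBit q0 = decide (ε % 2 = 1) := by
    change (ε <<< q0).testBit q0 = _
    rw [Nat.testBit_shiftLeft]
    simp [Nat.testBit_zero]
  unfold dg
  rw [h1]
  by_cases h : q = q0
  · subst h
    rw [h2]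
    rcases Nat.mod_two_eq_zero_or_one ε with h | h
    · simp [h, (Nat.even_iff.2 h).neg_one_pow]
    · simp [h, (Nat.odd_iff.2 h).neg_one_pow]
  · simp [h]

lemma sumT_spec (l : List (ℕ × ℕ)) : ∀ z s : ℕ, ∃ Z S : ℕ,
    (∀ (α : Type) (f : ℕ → ℕ → α), sumT l z s f = f Z S) ∧
    ∀ q, dg k Z S q = dg k z s q + (l.map fun t => if q = t.2 then (-1 : k) ^ t.1 else 0).sum := by
  induction l with
  | nil => intro z s; exact ⟨z, s, fun α f => rfl, fun q => by simp⟩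
  | cons t l ih =>
    intro z s
    obtain ⟨Z1, S1, h1, h1'⟩ := addK_spec k (Nat.shiftLeft 1 t.2) (Nat.shiftLeft t.1 t.2) z s
    obtain ⟨Z2, S2, h2, h2'⟩ := ih Z1 S1
    refine ⟨Z2, S2, fun α f => ?_, fun q => ?_⟩
    · rw [← h2 α f]
      exact h1 α fun z' s' => sumT l z' s' f
    · rw [h2', h1', dg_single]
      simp only [List.map_cons, List.sum_cons]
      ring

variable {V : Type*} [AddCommGroup V] [Module k V] (ξ : ℕ → V)

/-- The vector with given digits. -/
def F (w : ℕ × ℕ) : V := ∑ q ∈ Finset.range 2048, dg k w.1 w.2 q • ξ q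

lemma F_zero (s : ℕ) : F k ξ (0, s) = 0 := by simp [F, dg_zero]

lemma F_addK (z1 s1 z2 s2 : ℕ) : ∃ Z S : ℕ,
    (∀ (α : Type) (f : ℕ → ℕ → α), addK z1 s1 z2 s2 f = f Z S) ∧
    (∀ q, dg k Z S q = dg k z1 s1 q + dg k z2 s2 q) ∧
    F k ξ (Z, S) = F k ξ (z1, s1) + F k ξ (z2, s2) := by
  obtain ⟨Z, S, h1, h2⟩ := addK_spec k z1 s1 z2 s2
  refine ⟨Z, S, h1, h2, ?_⟩
  simp only [F, h2, add_smul, Finset.sum_add_distrib]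

lemma F_neg (z s : ℕ) : F k ξ (z, Nat.xor s z) = - F k ξ (z, s) := by
  simp only [F, dg_neg, neg_smul, Finset.sum_neg_distrib]

lemma sum_list_smul (l : List (ℕ × ℕ)) (hl : ∀ t ∈ l, t.2 < 2048) :
    ∑ q ∈ Finset.range 2048, (l.map fun t => if q = t.2 then (-1 : k) ^ t.1 else 0).sum • ξ q =
      (l.map fun t => (-1 : k) ^ t.1 • ξ t.2).sum := by
  induction l with
  | nil => simp
  | cons t l ih =>
    have ih' := ih fun t' ht' => hl t' (List.mem_cons_of_mem _ ht')
    have ht := hl t List.mem_cons_self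
    simp only [List.map_cons, List.sum_cons, add_smul, Finset.sum_add_distrib, ih']
    rw [add_left_inj]
    rw [Finset.sum_eq_single t.2]
    · simp
    · intro b _ hb; simp [hb]
    · intro h; exact absurd (Finset.mem_range.2 ht) h

lemma F_sumT (l : List (ℕ × ℕ)) (hl : ∀ t ∈ l, t.2 < 2048) : ∃ Z S : ℕ,
    (∀ (α : Type) (f : ℕ → ℕ → α), sumT l 0 0 f = f Z S) ∧
    F k ξ (Z, S) = (l.map fun t => (-1 : k) ^ t.1 • ξ t.2).sum := by
  obtain ⟨Z, S, h1, h2⟩ := sumT_spec k l 0 0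
  refine ⟨Z, S, h1, ?_⟩
  simp only [F, h2, dg_zero, zero_add]
  exact sum_list_smul k ξ l hl

lemma redL_cons (q z1 s1 : ℕ) (hz : z1.testBit q = true) (w : ℕ × ℕ) (l : List (ℕ × ℕ)) :
    ∃ w' : ℕ × ℕ, redL q z1 s1 (Nat.xor s1 z1) (bit s1 q) (w :: l) =
      w' :: redL q z1 s1 (Nat.xor s1 z1) (bit s1 q) l ∧ dg k w'.1 w'.2 q = 0 ∧
      ∃ c : k, F k ξ w' = F k ξ w + c • F k ξ (z1, s1) := by
  obtain ⟨z, s⟩ := w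
  obtain ⟨Zp, Sp, hp1, hp2, hp3⟩ := F_addK k ξ z1 s1 z s
  obtain ⟨Zm, Sm, hm1, hm2, hm3⟩ := F_addK k ξ z1 (Nat.xor s1 z1) z s
  rw [F_neg] at hm3
  have hp2 := hp2 q
  have hm2 := hm2 q
  rw [dg_neg] at hm2
  have e : redL q z1 s1 (Nat.xor s1 z1) (bit s1 q) ((z, s) :: l) =
    cond (bit z q)
        (cond (bit s q)
          (cond (bit s1 q)
            (addK z1 (Nat.xor s1 z1) z s fun z' s' =>
              (z', s') :: redL q z1 s1 (Nat.xor s1 z1) (bit s1 q) l)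
            (addK z1 s1 z s fun z' s' =>
              (z', s') :: redL q z1 s1 (Nat.xor s1 z1) (bit s1 q) l))
          (cond (bit s1 q)
            (addK z1 s1 z s fun z' s' =>
              (z', s') :: redL q z1 s1 (Nat.xor s1 z1) (bit s1 q) l)
            (addK z1 (Nat.xor s1 z1) z s fun z' s' =>
              (z', s') :: redL q z1 s1 (Nat.xor s1 z1) (bit s1 q) l)))
        ((z, s) :: redL q z1 s1 (Nat.xor s1 z1) (bit s1 q) l) := rfl
  rw [e, hp1, hm1]
  generalize redL q z1 s1 (Nat.xor s1 z1) (bit s1 q) l = tl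
  have P : ∃ c : k, F k ξ (Zp, Sp) = F k ξ (z, s) + c • F k ξ (z1, s1) :=
    ⟨1, by rw [hp3, one_smul, add_comm]⟩
  have N : ∃ c : k, F k ξ (Zm, Sm) = F k ξ (z, s) + c • F k ξ (z1, s1) :=
    ⟨-1, by rw [hm3, neg_one_smul, add_comm]⟩
  rw [bit_eq, bit_eq, bit_eq]
  unfold dg at hp2 hm2
  rw [hz] at hp2 hm2
  cases h1 : z.testBit q
  · exact ⟨(z, s), rfl, by simp [dg, h1], 0, by simp⟩
  · cases h2 : s.testBit q <;> cases h3 : s1.testBit q <;> simp only [h1, h2, h3] at hp2 hm2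
    · exact ⟨(Zm, Sm), rfl, by simp only [dg]; rw [hm2]; simp, N⟩
    · exact ⟨(Zp, Sp), rfl, by simp only [dg]; rw [hp2]; simp, P⟩
    · exact ⟨(Zp, Sp), rfl, by simp only [dg]; rw [hp2]; simp, P⟩
    · exact ⟨(Zm, Sm), rfl, by simp only [dg]; rw [hm2]; simp, N⟩

/-- The span of a list of rows. -/
def Sp (l : List (ℕ × ℕ)) : Submodule k V := Submodule.span k (F k ξ '' {w | w ∈ l})

lemma Sp_cons (w : ℕ × ℕ) (l : List (ℕ × ℕ)) :
    Sp k ξ (w :: l) = Submodule.span k {F k ξ w} ⊔ Sp k ξ l := by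
  unfold Sp
  rw [← Submodule.span_union]
  congr 1
  ext v
  simp [eq_comm]

lemma redL_spec (q z1 s1 : ℕ) (hz : z1.testBit q = true) (l : List (ℕ × ℕ)) :
    (∀ w ∈ redL q z1 s1 (Nat.xor s1 z1) (bit s1 q) l, dg k w.1 w.2 q = 0) ∧
    Submodule.span k {F k ξ (z1, s1)} ⊔ Sp k ξ l =
      Submodule.span k {F k ξ (z1, s1)} ⊔
        Sp k ξ (redL q z1 s1 (Nat.xor s1 z1) (bit s1 q) l) := by
  induction l with
  | nil => exact ⟨fun w hw => absurd hw List.not_mem_nil, rfl⟩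
  | cons w l ih =>
    obtain ⟨w', h1, h2, c, h3⟩ := redL_cons k ξ q z1 s1 hz w l
    rw [h1]
    refine ⟨?_, ?_⟩
    · intro u hu
      rcases List.mem_cons.1 hu with rfl | hu
      · exact h2
      · exact ih.1 u hu
    · rw [Sp_cons, Sp_cons, sup_left_comm, ih.2, sup_left_comm, ← sup_assoc, ← sup_assoc]
      refine congrArg (fun U => U ⊔ Sp k ξ (redL q z1 s1 (Nat.xor s1 z1) (bit s1 q) l)) ?_
      rw [← Submodule.span_union, ← Submodule.span_union, h3]
      apply le_antisymm
      · rw [Submodule.span_le]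
        rintro v (hv | hv)
        · rw [Set.mem_singleton_iff.1 hv]
          exact Submodule.subset_span (Or.inl (Set.mem_singleton _))
        · rw [Set.mem_singleton_iff.1 hv]
          have : F k ξ w = (F k ξ w + c • F k ξ (z1, s1)) - c • F k ξ (z1, s1) :=
            (add_sub_cancel_right _ _).symm
          refine Set.mem_of_eq_of_mem this ?_
          exact Submodule.sub_mem _ (Submodule.subset_span (Or.inr (Set.mem_singleton _)))
            (Submodule.smul_mem _ _ (Submodule.subset_span (Or.inl (Set.mem_singleton _))))
      · rw [Submodule.span_le]
        rintro v (hv | hv)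
        · rw [Set.mem_singleton_iff.1 hv]
          exact Submodule.subset_span (Or.inl (Set.mem_singleton _))
        · rw [Set.mem_singleton_iff.1 hv]
          exact Submodule.add_mem _ (Submodule.subset_span (Or.inr (Set.mem_singleton _)))
            (Submodule.smul_mem _ _ (Submodule.subset_span (Or.inl (Set.mem_singleton _))))

lemma lg_spec {α : Type} (z : ℕ) (f : ℕ → α) : ∃ q, lg z f = f q := by
  let R : List ℕ → ℕ → ℕ → α := fun L => List.rec (fun _ q => f q) (fun b _ ih z q =>
    force (Nat.shiftRight z b) fun z' =>
      cond (Nat.beq z' 0) (ih z q) (force (Nat.add q b) fun q' => ih z' q')) L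
  have : ∀ (L : List ℕ) (z q : ℕ), ∃ q', R L z q = f q' := by
    intro L
    induction L with
    | nil => intro z q; exact ⟨q, rfl⟩
    | cons b L ih =>
      intro z q
      have e : R (b :: L) z q = force (Nat.shiftRight z b) fun z' =>
        cond (Nat.beq z' 0) (R L z q) (force (Nat.add q b) fun q' => R L z' q') := rfl
      rw [e, force_eq, force_eq]
      cases Nat.beq (Nat.shiftRight z b) 0
      · exact ih _ _
      · exact ih _ _
  exact this [1024, 512, 256, 128, 64, 32, 16, 8, 4, 2, 1] z 0

lemma rkc_spec [FiniteDimensional k V] (n : ℕ)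
    (hv : ∀ q, valid n q = true → q < 2048 ∧ ∃ e : V →ₗ[k] k, ∀ q' < 2048,
      e (ξ q') = if q' = q then 1 else 0) (fuel : ℕ) :
    ∀ l r, rkc n fuel l r = true → finrank k (Sp k ξ l) = r := by
  induction fuel with
  | zero => intro l r h; exact absurd h (by simp [rkc])
  | succ fuel ih =>
    intro l r h
    match l, h with
    | [], h =>
      have : r = 0 := Nat.eq_of_beq_eq_true h
      rw [this]
      have h0 : Sp k ξ [] = ⊥ := by
        unfold Sp
        rw [Submodule.span_eq_bot]
        rintro v ⟨w, hw, _⟩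
        exact absurd hw List.not_mem_nil
      rw [h0, finrank_bot]
    | (z, s) :: ws, h =>
      have e : rkc n (fuel + 1) ((z, s) :: ws) r = cond (Nat.beq z 0) (rkc n fuel ws r)
        (lg z fun q =>
          cond (and (valid n q) (and (bit z q) (Nat.ble 1 r)))
            (force (Nat.xor s z) fun n1 =>
             force (Nat.pred r) fun r' => rkc n fuel (redL q z s n1 (bit s q) ws) r')
            false) := rfl
      rw [e] at h
      rw [Sp_cons]
      cases hz : Nat.beq z 0 with
      | true =>
        rw [hz, cond_true] at h
        have : z = 0 := Nat.eq_of_beq_eq_true hz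
        subst this
        rw [F_zero, Submodule.span_zero_singleton, bot_sup_eq]
        exact ih ws r h
      | false =>
        rw [hz, cond_false] at h
        obtain ⟨q, hq⟩ := lg_spec z (fun q =>
          cond (and (valid n q) (and (bit z q) (Nat.ble 1 r)))
            (force (Nat.xor s z) fun n1 =>
             force (Nat.pred r) fun r' => rkc n fuel (redL q z s n1 (bit s q) ws) r')
            false)
        rw [hq] at h
        simp only [force_eq] at h
        cases hc : and (valid n q) (and (bit z q) (Nat.ble 1 r)) with
        | false => rw [hc] at h; simp at h
        | true =>
          rw [hc, cond_true] at h
          rw [Bool.and_eq_true, Bool.and_eq_true, bit_eq] at hc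
          obtain ⟨hc1, hc2, hc3⟩ := hc
          have hr : 1 ≤ r := Nat.le_of_ble_eq_true hc3
          have ih' := ih _ _ h
          obtain ⟨h1, h2⟩ := redL_spec k ξ q z s hc2 ws
          rw [h2]
          generalize redL q z s (Nat.xor s z) (bit s q) ws = l' at *
          obtain ⟨hq2, ev, hev⟩ := hv q hc1
          have evF : ∀ w : ℕ × ℕ, ev (F k ξ w) = dg k w.1 w.2 q := by
            intro w
            unfold F
            rw [map_sum, Finset.sum_eq_single q]
            · rw [map_smul, hev q hq2]; simp
            · intro b hb hbq
              rw [map_smul, hev b (Finset.mem_range.1 hb)]; simp [hbq]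
            · intro h; exact absurd (Finset.mem_range.2 hq2) h
          have hle : Sp k ξ l' ≤ LinearMap.ker ev := by
            unfold Sp
            rw [Submodule.span_le]
            rintro v ⟨w, hw, rfl⟩
            change ev _ = 0
            rw [evF]; exact h1 w hw
          have hne : ev (F k ξ (z, s)) ≠ 0 := by
            rw [evF]
            simp only [dg, hc2, if_true]
            split_ifs <;> simp
          have hF : F k ξ (z, s) ≠ 0 := by
            intro h0; rw [h0, map_zero] at hne; exact hne rfl
          have hinf : Submodule.span k {F k ξ (z, s)} ⊓ Sp k ξ l' = ⊥ := by
            rw [eq_bot_iff]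
            rintro v ⟨hv1, hv2⟩
            obtain ⟨c, rfl⟩ := Submodule.mem_span_singleton.1 hv1
            have h0 := hle hv2
            rw [LinearMap.mem_ker, map_smul, smul_eq_mul] at h0
            rcases mul_eq_zero.1 h0 with h0 | h0
            · simp [h0]
            · exact absurd h0 hne
          have := Submodule.finrank_sup_add_finrank_inf_eq (Submodule.span k {F k ξ (z, s)})
            (Sp k ξ l')
          rw [hinf, finrank_bot, finrank_span_singleton hF, ih'] at this
          rw [Nat.pred_eq_sub_one] at this
          omega

lemma peel_spec (n : ℕ) {W : Type*} [AddCommGroup W] [Module k W] (ζ : ℕ → W) (η : ℕ → W)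
    (hv : ∀ q, valid n q = true → q < 2048)
    (hη : ∀ q, valid n q = true → ∃ Z S : ℕ,
      (∀ (α : Type) (f : ℕ → ℕ → α),
        sumT (terms (Nat.shiftRight q 3) (Nat.land q 7)) 0 0 f = f Z S) ∧
      F k ζ (Z, S) = η q) (fuel : ℕ) :
    ∀ z s az as, peel n fuel z s az as = true → F k ζ (az, as) + F k η (z, s) = 0 := by
  induction fuel with
  | zero => intro z s az as h; exact absurd h (by simp [peel])
  | succ fuel ih =>
    intro z s az as h
    have e : peel n (fuel + 1) z s az as = cond (Nat.beq z 0) (Nat.beq az 0)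
      (lg z fun q =>
        cond (and (valid n q) (bit z q))
          (sumT (terms (Nat.shiftRight q 3) (Nat.land q 7)) 0 0 fun rz rs =>
            addK rz (cond (bit s q) (Nat.xor rs rz) rs) az as fun az' as' =>
              force (Nat.xor z (Nat.pow 2 q)) fun z' => peel n fuel z' s az' as')
          false) := rfl
    rw [e] at h
    cases hz : Nat.beq z 0 with
    | true =>
      rw [hz, cond_true] at h
      have h1 : z = 0 := Nat.eq_of_beq_eq_true hz
      have h2 : az = 0 := Nat.eq_of_beq_eq_true h
      rw [h1, h2, F_zero, F_zero, add_zero]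
    | false =>
      rw [hz, cond_false] at h
      obtain ⟨q, hq⟩ := lg_spec z (fun q =>
        cond (and (valid n q) (bit z q))
          (sumT (terms (Nat.shiftRight q 3) (Nat.land q 7)) 0 0 fun rz rs =>
            addK rz (cond (bit s q) (Nat.xor rs rz) rs) az as fun az' as' =>
              force (Nat.xor z (Nat.pow 2 q)) fun z' => peel n fuel z' s az' as')
          false)
      rw [hq] at h
      cases hc : and (valid n q) (bit z q) with
      | false => simp only [hc] at h; simp at h
      | true =>
        simp only [hc, cond_true] at h
        rw [Bool.and_eq_true, bit_eq] at hc
        obtain ⟨hc1, hc2⟩ := hc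
        obtain ⟨Z, S, h1, h2⟩ := hη q hc1
        rw [h1] at h
        obtain ⟨Z', S', h1', h2', h3'⟩ := F_addK k ζ Z (cond (bit s q) (Nat.xor S Z) S) az as
        rw [h1', force_eq] at h
        have ih' := ih _ _ _ _ h
        have hterm : F k ζ (Z, cond (bit s q) (Nat.xor S Z) S) = dg k z s q • η q := by
          rw [bit_eq]
          simp only [dg, hc2, if_true]
          cases s.testBit q
          · simp [h2]
          · rw [cond_true, F_neg, h2]; simp
        have hrest : F k η (z, s) = dg k z s q • η q + F k η (Nat.xor z (Nat.pow 2 q), s) := by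
          have hd : ∀ q', dg k z s q' =
              (if q' = q then dg k z s q else 0) + dg k (Nat.xor z (Nat.pow 2 q)) s q' := by
            intro q'
            have hx : (Nat.xor z (Nat.pow 2 q)).testBit q' = (z.testBit q' ^^ decide (q = q')) := by
              change (z ^^^ 2 ^ q).testBit q' = _
              rw [Nat.testBit_xor, Nat.testBit_two_pow]
            unfold dg
            rw [hx]
            by_cases hqq : q' = q
            · subst hqq; simp [hc2]
            · simp [hqq, Ne.symm hqq]
          unfold F
          have : ∀ q' ∈ Finset.range 2048, dg k z s q' • η q' =
              (if q' = q then dg k z s q • η q else 0) +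
                dg k (Nat.xor z (Nat.pow 2 q)) s q' • η q' := by
            intro q' _
            conv_lhs => rw [hd q', add_smul]
            rw [add_left_inj]
            split_ifs with hqq
            · rw [hqq]
            · simp
          rw [Finset.sum_congr rfl this, Finset.sum_add_distrib, add_left_inj]
          rw [Finset.sum_ite_eq' , if_pos (Finset.mem_range.2 (hv q hc1))]
        rw [hrest, ← ih', h3', hterm]
        abel

end correctness

section assembly

attribute [local irreducible] F

variable (k : Type*) [Field k] [CharP k 3]

/-- The space of cochains. -/
abbrev Co (n : ℕ) := (sl3 k) [⋀^Fin n]→ₗ[k] (sl3ModCenter k)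

/-- Coordinates on the coefficient module. -/
noncomputable def lcEquiv : sl3ModCenter k ≃ₗ[k] (Fin 7 → k) :=
  LinearEquiv.ofBijective (LinearMap.pi fun m : Fin 7 => lc k m.castSucc) (by
    constructor
    · rw [← LinearMap.ker_eq_bot, eq_bot_iff]
      intro w hw
      rw [Submodule.mem_bot]
      apply lc_ext
      intro y hy
      have h7 : (y : ℕ) < 7 := by
        have := y.2
        have h' : (y : ℕ) ≠ 7 := fun h => hy (Fin.ext h)
        omega
      exact congrFun (LinearMap.mem_ker.1 hw) ⟨y, h7⟩
    · intro c
      refine ⟨qm k (∑ m : Fin 7, c m • bs k m.castSucc), ?_⟩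
      funext m
      rw [LinearMap.pi_apply, lc_qm, if_neg (by
        intro h
        have := congrArg Fin.val h
        have h2 := m.2
        simp at this
        omega)]
      simp [Finsupp.single_apply])

instance coFinite (n : ℕ) : FiniteDimensional k (Co k n) := by
  have : Module.Finite k (sl3ModCenter k) := Module.Finite.equiv (lcEquiv k).symm
  exact Module.Finite.equiv (cfEquiv (M := sl3ModCenter k) (bs k) n).symm

lemma finrank_co5 : finrank k (Co k 5) = 392 := by
  have : Module.Finite k (sl3ModCenter k) := Module.Finite.equiv (lcEquiv k).symm
  have : Fintype (Set.powersetCard (Fin 8) 5) := Fintype.ofFinite _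
  rw [(cfEquiv (M := sl3ModCenter k) (bs k) 5).finrank_eq, Module.finrank_pi_fintype]
  rw [(lcEquiv k).finrank_eq, Module.finrank_fin_fun, Finset.sum_const, Finset.card_univ,
    ← Nat.card_eq_fintype_card, Set.powersetCard.card, Nat.card_eq_fintype_card, Fintype.card_fin]
  decide

/-- Coordinate functionals. -/
noncomputable def XqL (n q : ℕ) : Dual k (Co k n) :=
  lc k (Fin.ofNat 8 q) ∘ₗ cfL (bs k) n (fs (q / 8))

lemma XqL_apply (n q : ℕ) (ψ : Co k n) : XqL k n q ψ = Xq k ψ q := rfl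

lemma valid_spec (n : ℕ) (hn : n = 4 ∨ n = 5) (q : ℕ) (h : valid n q = true) :
    q < 2048 ∧ (fs (q / 8)).card = n ∧ q % 8 < 7 := by
  unfold valid at h
  rw [Bool.and_eq_true] at h
  obtain ⟨h1, h2⟩ := h
  have e1 : Nat.shiftRight q 3 = q / 8 := Nat.shiftRight_eq_div_pow q 3
  have e2 : Nat.land q 7 = q % 8 := Nat.and_two_pow_sub_one_eq_mod q 3
  rw [e1] at h1
  rw [e2] at h2
  have h2' : q % 8 + 1 ≤ 7 := Nat.le_of_ble_eq_true h2
  have hlt : q / 8 < 256 := by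
    by_contra hge
    rw [bit_eq] at h1
    have : vt n < 2 ^ (q / 8) := by
      calc vt n < 2 ^ 256 := by rcases hn with rfl | rfl <;> decide
        _ ≤ 2 ^ (q / 8) := Nat.pow_le_pow_right (by norm_num) (by omega)
    rw [Nat.testBit_lt_two_pow this] at h1
    exact absurd h1 (by simp)
  refine ⟨by omega, ?_, by omega⟩
  rcases hn with rfl | rfl
  · exact (card_vt4 ⟨_, hlt⟩).2 h1
  · exact (card_vt5 ⟨_, hlt⟩).2 h1

lemma dual_elt (n : ℕ) (hn : n = 4 ∨ n = 5) (q : ℕ) (h : valid n q = true) :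
    q < 2048 ∧ ∃ e : Dual k (Co k n) →ₗ[k] k, ∀ q' < 2048,
      e (XqL k n q') = if q' = q then 1 else 0 := by
  obtain ⟨h1, h2, h3⟩ := valid_spec n hn q h
  refine ⟨h1, ?_⟩
  classical
  let S : Set.powersetCard (Fin 8) n := ⟨fs (q / 8), h2⟩
  let ψ : Co k n := (cfEquiv (M := sl3ModCenter k) (bs k) n).symm
    (Pi.single S (qm k (bs k (Fin.ofNat 8 q))))
  refine ⟨Dual.eval k (Co k n) ψ, fun q' hq' => ?_⟩
  change lc k (Fin.ofNat 8 q') (cf (bs k) ψ (fs (q' / 8))) = _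
  by_cases hc : (fs (q' / 8)).card = n
  · have e : cf (bs k) ψ (fs (q' / 8)) =
        (Pi.single S (qm k (bs k (Fin.ofNat 8 q))) : _ → sl3ModCenter k) ⟨fs (q' / 8), hc⟩ := by
      have := cfEquiv_apply (bs k) n ψ ⟨fs (q' / 8), hc⟩
      rw [← this]
      simp only [ψ, LinearEquiv.apply_symm_apply]
    rw [e]
    by_cases hS : fs (q' / 8) = fs (q / 8)
    · have hq8 : q' / 8 = q / 8 := fs_inj (by omega) (by omega) hS
      have hSS : (⟨fs (q' / 8), hc⟩ : Set.powersetCard (Fin 8) n) = S := Subtype.ext hS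
      rw [hSS, Pi.single_eq_same, lc_qm]
      by_cases hqq : q' = q
      · subst hqq
        have : Fin.ofNat 8 q' ≠ 7 := by
          intro h
          have h' : q' % 8 = 7 := congrArg Fin.val h
          omega
        rw [if_neg this, if_pos rfl]
        simp
      · rw [if_neg hqq]
        have : Fin.ofNat 8 q ≠ Fin.ofNat 8 q' := by
          intro h
          have h' : q % 8 = q' % 8 := congrArg Fin.val h
          omega
        split_ifs
        · rfl
        · rw [Basis.coord_apply, Basis.repr_self, Finsupp.single_apply, if_neg this]
    · have hSS : (⟨fs (q' / 8), hc⟩ : Set.powersetCard (Fin 8) n) ≠ S :=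
        fun h => hS (congrArg Subtype.val h)
      rw [Pi.single_eq_of_ne hSS, map_zero, if_neg]
      rintro rfl
      exact hS rfl
  · have e : cf (bs k) ψ (fs (q' / 8)) = 0 := by
      unfold cf
      rw [dif_neg hc]
    rw [e, map_zero, if_neg]
    rintro rfl
    exact hc h2

lemma row_spec (n a : ℕ) (ha : a < 256) (hs : (fs a).card = n + 2) (m : ℕ) (hm : m < 7) :
    ∃ Z S : ℕ, (∀ (α : Type) (f : ℕ → ℕ → α), sumT (terms a m) 0 0 f = f Z S) ∧
      ∀ ψ : Co k (n + 1), F k (XqL k (n + 1)) (Z, S) ψ = X k (dfun ψ) (fs a) (Fin.ofNat 8 m) := by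
  have e : ((Fin.ofNat 8 m : Fin 8) : ℕ) = m := Nat.mod_eq_of_lt (by omega)
  have h7 : (Fin.ofNat 8 m : Fin 8) ≠ 7 := by
    intro h
    have := congrArg Fin.val h
    rw [e] at this
    have : m = 7 := this
    omega
  have hl := terms_lt a ha (Fin.ofNat 8 m)
  rw [e] at hl
  obtain ⟨Z, S, h1, h2⟩ := F_sumT k (XqL k (n + 1)) (terms a m) hl
  refine ⟨Z, S, h1, fun ψ => ?_⟩
  rw [h2, X_terms k ψ a ha hs _ h7, e]
  have := map_list_sum (Dual.eval k (Co k (n + 1)) ψ)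
    ((terms a m).map fun t => (-1 : k) ^ t.1 • XqL k (n + 1) t.2)
  rw [List.map_map] at this
  exact this

lemma mem_foldr_gen {β : Type} (g : ℕ → ℕ → List β → List β) (h : ℕ → ℕ → β)
    (hg : ∀ a m tl, g a m tl = h a m :: tl) (l : List ℕ) (w : β) :
    w ∈ l.foldr (fun a tl => [0, 1, 2, 3, 4, 5, 6].foldr (fun m tl => g a m tl) tl) [] ↔
      ∃ a ∈ l, ∃ m < 7, h a m = w := by
  have key : ∀ (a : ℕ) (L : List ℕ) (tl : List β),
      L.foldr (fun m tl => g a m tl) tl = L.map (fun m => h a m) ++ tl := by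
    intro a L tl
    induction L with
    | nil => rw [List.foldr_nil, List.map_nil, List.nil_append]
    | cons m L ih => rw [List.foldr_cons, ih, hg, List.map_cons, List.cons_append]
  induction l with
  | nil => simp
  | cons a l ih =>
    rw [List.foldr_cons, key, List.mem_append, List.mem_map]
    refine Iff.trans (or_congr Iff.rfl ih) ?_
    constructor
    · rintro (⟨m, hm, h⟩ | ⟨b, hb, h⟩)
      · refine ⟨a, List.mem_cons_self, m, ?_, h⟩
        simp at hm
        omega
      · exact ⟨b, List.mem_cons_of_mem _ hb, h⟩
    · rintro ⟨b, hb, m, hm, h⟩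
      rcases List.mem_cons.1 hb with rfl | hb
      · left
        refine ⟨m, ?_, h⟩
        simp
        omega
      · exact Or.inr ⟨b, hb, m, hm, h⟩

lemma mem_rows (l : List ℕ) (w : ℕ × ℕ) :
    w ∈ rows l ↔ ∃ a ∈ l, ∃ m < 7, sumT (terms a m) 0 0 Prod.mk = w := by
  unfold rows
  refine mem_foldr_gen (fun a m tl => sumT (terms a m) 0 0 fun z s => (z, s) :: tl)
    (fun a m => sumT (terms a m) 0 0 Prod.mk) ?_ l w
  intro a m tl
  obtain ⟨Z, S, h, _⟩ := sumT_spec (ZMod 3) (terms a m) 0 0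
  rw [h, h]

lemma co_ext (n : ℕ) (ψ : Co k n)
    (h : ∀ a < 256, (fs a).card = n → ∀ m < 7, X k ψ (fs a) (Fin.ofNat 8 m) = 0) : ψ = 0 := by
  apply (cfEquiv (M := sl3ModCenter k) (bs k) n).injective
  rw [map_zero]
  funext s
  rw [cfEquiv_apply]
  obtain ⟨a, ha, hs⟩ := fs_surj s.1
  apply lc_ext
  intro y hy
  have h7 : (y : ℕ) < 7 := by
    have := y.2
    have h' : (y : ℕ) ≠ 7 := fun h => hy (Fin.ext h)
    omega
  have := h a ha (by rw [hs]; exact s.2) y h7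
  have e : Fin.ofNat 8 (y : ℕ) = y := Fin.ext (Nat.mod_eq_of_lt y.2)
  rw [e, hs] at this
  exact this

lemma ker_spec (n : ℕ) (l : List ℕ) (hl : ∀ a, a ∈ l ↔ a < 256 ∧ (fs a).card = n + 2)
    (ψ : Co k (n + 1)) :
    (∀ w ∈ rows l, F k (XqL k (n + 1)) w ψ = 0) ↔ dfun ψ = 0 := by
  constructor
  · intro h
    apply co_ext
    intro a ha hs m hm
    obtain ⟨Z, S, h1, h2⟩ := row_spec k n a ha hs m hm
    rw [← h2]
    apply h
    rw [mem_rows]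
    exact ⟨a, (hl a).2 ⟨ha, hs⟩, m, hm, h1 _ _⟩
  · intro h w hw
    rw [mem_rows] at hw
    obtain ⟨a, ha, m, hm, rfl⟩ := hw
    obtain ⟨ha, hs⟩ := (hl a).1 ha
    obtain ⟨Z, S, h1, h2⟩ := row_spec k n a ha hs m hm
    rw [h1, h2, h]
    unfold X cf
    split_ifs <;> simp

lemma finrank_ker (n r fuel : ℕ) (hn : n + 1 = 4 ∨ n + 1 = 5) (l : List ℕ)
    (hl : ∀ a, a ∈ l ↔ a < 256 ∧ (fs a).card = n + 2)
    (hr : rkc (n + 1) fuel (rows l) r = true) :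
    r + finrank k (LinearMap.ker (dlin (k := k) (g := sl3 k) (M := sl3ModCenter k) n)) =
      finrank k (Co k (n + 1)) := by
  have h1 := rkc_spec k (XqL k (n + 1)) (n + 1) (dual_elt k (n + 1) hn) fuel (rows l) r hr
  have h2 := Subspace.finrank_add_finrank_dualCoannihilator_eq (Sp k (XqL k (n + 1)) (rows l))
  have h3 : (Sp k (XqL k (n + 1)) (rows l)).dualCoannihilator =
      LinearMap.ker (dlin (k := k) (g := sl3 k) (M := sl3ModCenter k) n) := by
    ext ψ
    rw [Submodule.mem_dualCoannihilator, LinearMap.mem_ker]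
    change _ ↔ dfun ψ = 0
    rw [← ker_spec k n l hl ψ]
    constructor
    · intro h w hw
      exact h _ (Submodule.subset_span (Set.mem_image_of_mem _ hw))
    · intro h φ hφ
      have : Sp k (XqL k (n + 1)) (rows l) ≤ LinearMap.ker (Dual.eval k (Co k (n + 1)) ψ) := by
        unfold Sp
        rw [Submodule.span_le]
        rintro v ⟨w, hw, rfl⟩
        rw [SetLike.mem_coe, LinearMap.mem_ker, Dual.eval_apply]
        exact h w hw
      exact this hφ
  rw [h1, h3] at h2
  exact h2

lemma hl5 (a : ℕ) : a ∈ masks5 ↔ a < 256 ∧ (fs a).card = 3 + 2 :=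
  ⟨fun h => ⟨masks5_lt a h, (card_masks5 ⟨a, masks5_lt a h⟩).2 h⟩,
    fun h => (card_masks5 ⟨a, h.1⟩).1 h.2⟩

lemma hl6 (a : ℕ) : a ∈ masks6 ↔ a < 256 ∧ (fs a).card = 4 + 2 :=
  ⟨fun h => ⟨masks6_lt a h, (card_masks6 ⟨a, masks6_lt a h⟩).2 h⟩,
    fun h => (card_masks6 ⟨a, h.1⟩).1 h.2⟩

lemma d_sq (φ : Co k 4) : dfun (dfun φ) = 0 := by
  rw [← ker_spec k 4 masks6 hl6]
  intro w hw
  let D := dlin (k := k) (g := sl3 k) (M := sl3ModCenter k) 3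
  let η : ℕ → Dual k (Co k 4) := fun q => XqL k 5 q ∘ₗ D
  have hp : peel 5 100 w.1 w.2 0 0 = true := List.all_eq_true.1 dsq w hw
  have := peel_spec k 5 (XqL k 4) η (fun q hq => (valid_spec 5 (Or.inr rfl) q hq).1)
    (fun q hq => by
      obtain ⟨h1, h2, h3⟩ := valid_spec 5 (Or.inr rfl) q hq
      have e1 : Nat.shiftRight q 3 = q / 8 := Nat.shiftRight_eq_div_pow q 3
      have e2 : Nat.land q 7 = q % 8 := Nat.and_two_pow_sub_one_eq_mod q 3
      rw [e1, e2]
      obtain ⟨Z, S, h4, h5⟩ := row_spec k 3 (q / 8) (by omega) h2 (q % 8) h3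
      refine ⟨Z, S, h4, ?_⟩
      apply LinearMap.ext
      intro ψ
      rw [h5 ψ]
      change _ = X k (dfun ψ) (fs (q / 8)) (Fin.ofNat 8 q)
      exact congrArg (X k (dfun ψ) (fs (q / 8))) (Fin.ext (Nat.mod_mod q 8))) 100 w.1 w.2 0 0 hp
  rw [F_zero, zero_add] at this
  have h0 := LinearMap.congr_fun this φ
  rw [LinearMap.zero_apply] at h0
  rw [← h0]
  unfold F
  rw [LinearMap.sum_apply, LinearMap.sum_apply]
  rfl

lemma dlin_eq (n : ℕ) (φ : Co k (n + 1)) :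
    dlin (k := k) (g := sl3 k) (M := sl3ModCenter k) n φ = dfun φ := rfl

lemma dlin_dlin (φ : Co k 4) : dlin (k := k) (g := sl3 k) (M := sl3ModCenter k) 4
    (dlin (k := k) (g := sl3 k) (M := sl3ModCenter k) 3 φ) = 0 := by
  rw [dlin_eq k 3 φ]
  exact (dlin_eq k 4 (dfun φ)).trans (d_sq k φ)

lemma ceB_le : ceB k (sl3 k) (sl3ModCenter k) 5 ≤ ceZ k (sl3 k) (sl3ModCenter k) 5 := by
  have eZ := ceZ_eq (k := k) (g := sl3 k) (M := sl3ModCenter k) 4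
  have eB := ceB_eq (k := k) (g := sl3 k) (M := sl3ModCenter k) 3
  intro χ hχ
  have hχ' := eB.le hχ
  obtain ⟨φ, hφ⟩ := LinearMap.mem_range.1 hχ'
  apply eZ.ge
  rw [← hφ]
  exact LinearMap.mem_ker.2 (dlin_dlin k φ)

theorem main : finrank k (ceH k (sl3 k) (sl3ModCenter k) 5) = 8 := by
  have hZ := finrank_ker k 4 154 500 (Or.inr rfl) masks6 hl6 rk5
  have hB := finrank_ker k 3 230 500 (Or.inl rfl) masks5 hl5 rk4
  have hC := finrank_co5 k
  have hR := LinearMap.finrank_range_add_finrank_ker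
    (dlin (k := k) (g := sl3 k) (M := sl3ModCenter k) 3)
  have eZ := ceZ_eq (k := k) (g := sl3 k) (M := sl3ModCenter k) 4
  have eB := ceB_eq (k := k) (g := sl3 k) (M := sl3ModCenter k) 3
  rw [← eZ] at hZ
  rw [← eB] at hR
  have hle := ceB_le k
  have hq := Submodule.finrank_quotient_add_finrank
    ((ceB k (sl3 k) (sl3ModCenter k) 5).comap (ceZ k (sl3 k) (sl3ModCenter k) 5).subtype)
  have hc := (Submodule.comapSubtypeEquivOfLe hle).finrank_eq
  unfold ceH
  simp only [Nat.reduceAdd] at *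
  unfold Co at *
  omega

end assembly

end CE3

theorem H5_quotient_module_dim (k : Type*) [Field k] [IsAlgClosed k] [CharP k 3] :
    Module.finrank k (ceH k (sl3 k) (sl3ModCenter k) 5) = 8 :=
  CE3.main k
end
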